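/- Let A = kQ/I be a gentle algebra with finite global dimension (equivalently, (Q, I) has no oriented cycle with full relations). Then the left and right self-injective dimensions of A both equal gl.dim A, and this common value equals the maximum length of a forbidden thread of A. -/

import Mathlib

open MulOpposite DirectSum

set_option autoImplicit false

/-- The combinatorial data of a finite quiver together with a set of
length-two relations (`rel a b` means that the length-two path `a·b` lies in
the admissible ideal `I`). -/
structure GentleData : Type 1 where
  V : Type
  A : Type
  [fintypeV : Fintype V]
  [fintypeA : Fintype A]
  [decEqV : DecidableEq V]
  [decEqA : DecidableEq A]
  src : A → V
  tgt : A → V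
  rel : A → A → Prop

attribute [instance] GentleData.fintypeV GentleData.fintypeA GentleData.decEqV GentleData.decEqA

/-- The gentleness conditions on a bound quiver `(Q, I)`:
relations are composable length-two paths; at most two arrows start
(resp. end) at every vertex; for every arrow `β` there is at most one arrow `α`
with `αβ ∉ I` and at most one with `αβ ∈ I`, and dually; and there is a bound
on the length of paths avoiding relations (admissibility). -/
def IsGentle (Q : GentleData) : Prop :=
  (∀ a b, Q.rel a b → Q.tgt a = Q.src b) ∧
  (∀ v : Q.V, Set.ncard {a : Q.A | Q.src a = v} ≤ 2) ∧
  (∀ v : Q.V, Set.ncard {a : Q.A | Q.tgt a = v} ≤ 2) ∧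
  (∀ b : Q.A, Set.ncard {a : Q.A | Q.tgt a = Q.src b ∧ ¬ Q.rel a b} ≤ 1) ∧
  (∀ b : Q.A, Set.ncard {a : Q.A | Q.tgt a = Q.src b ∧ Q.rel a b} ≤ 1) ∧
  (∀ a : Q.A, Set.ncard {b : Q.A | Q.src b = Q.tgt a ∧ ¬ Q.rel a b} ≤ 1) ∧
  (∀ a : Q.A, Set.ncard {b : Q.A | Q.src b = Q.tgt a ∧ Q.rel a b} ≤ 1) ∧
  (∃ N : ℕ, ∀ p : ℕ → Q.A, ¬ ∀ i, i < N → (Q.tgt (p i) = Q.src (p (i+1)) ∧ ¬ Q.rel (p i) (p (i+1))))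

/-- Generators of the path algebra: one generator for each vertex (the
corresponding trivial path) and one for each arrow. -/
inductive GenSym (Q : GentleData) : Type
  | vertex : Q.V → GenSym Q
  | arrow : Q.A → GenSym Q

/-- The defining relations of the algebra `kQ/I`: the trivial paths are
orthogonal idempotents summing to `1`, arrows are compatible with the trivial
paths at their source and target, and the chosen length-two paths vanish. -/
inductive GentleRel (k : Type) [Field k] (Q : GentleData) :
    FreeAlgebra k (GenSym Q) → FreeAlgebra k (GenSym Q) → Prop
  | idem (v : Q.V) : GentleRel k Q
      (FreeAlgebra.ι k (GenSym.vertex v) * FreeAlgebra.ι k (GenSym.vertex v))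
      (FreeAlgebra.ι k (GenSym.vertex v))
  | orth (v w : Q.V) (h : v ≠ w) : GentleRel k Q
      (FreeAlgebra.ι k (GenSym.vertex v) * FreeAlgebra.ι k (GenSym.vertex w)) 0
  | sum_idem : GentleRel k Q (∑ v : Q.V, FreeAlgebra.ι k (GenSym.vertex v)) 1
  | src_mul (a : Q.A) : GentleRel k Q
      (FreeAlgebra.ι k (GenSym.vertex (Q.src a)) * FreeAlgebra.ι k (GenSym.arrow a))
      (FreeAlgebra.ι k (GenSym.arrow a))
  | mul_tgt (a : Q.A) : GentleRel k Q
      (FreeAlgebra.ι k (GenSym.arrow a) * FreeAlgebra.ι k (GenSym.vertex (Q.tgt a)))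
      (FreeAlgebra.ι k (GenSym.arrow a))
  | relation (a b : Q.A) (h : Q.rel a b) : GentleRel k Q
      (FreeAlgebra.ι k (GenSym.arrow a) * FreeAlgebra.ι k (GenSym.arrow b)) 0

/-- The algebra `A = kQ/I` presented by the bound quiver `Q`. -/
abbrev GentleAlgebra (k : Type) [Field k] (Q : GentleData) : Type :=
  RingQuot (GentleRel k Q)

/-- The image in `kQ/I` of a generator. -/
noncomputable def ofGen (k : Type) [Field k] (Q : GentleData) (x : GenSym Q) :
    GentleAlgebra k Q :=
  RingQuot.mkAlgHom k (GentleRel k Q) (FreeAlgebra.ι k x)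

/-- The idempotent `e_v ∈ kQ/I` of a vertex `v`. -/
noncomputable def idemOf (k : Type) [Field k] (Q : GentleData) (v : Q.V) :
    GentleAlgebra k Q :=
  ofGen k Q (GenSym.vertex v)

/-- The element of `kQ/I` given by an arrow `a`. -/
noncomputable def arrOf (k : Type) [Field k] (Q : GentleData) (a : Q.A) :
    GentleAlgebra k Q :=
  ofGen k Q (GenSym.arrow a)

/-- The indecomposable projective right module `e_v A`, as a right submodule
(i.e. `Aᵐᵒᵖ`-submodule) of `A`. -/
noncomputable def vertexModule (k : Type) [Field k] (Q : GentleData) (v : Q.V) :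
    Submodule (GentleAlgebra k Q)ᵐᵒᵖ (GentleAlgebra k Q) :=
  Submodule.span (GentleAlgebra k Q)ᵐᵒᵖ {idemOf k Q v}

/-- The right module `αA` generated by an arrow `α`, as a right submodule of `A`. -/
noncomputable def arrowModule (k : Type) [Field k] (Q : GentleData) (a : Q.A) :
    Submodule (GentleAlgebra k Q)ᵐᵒᵖ (GentleAlgebra k Q) :=
  Submodule.span (GentleAlgebra k Q)ᵐᵒᵖ {arrOf k Q a}

/-- An oriented cycle `c` of length `ℓ` with full relations:
`t(cᵢ) = s(cᵢ₊₁)` and `cᵢ cᵢ₊₁ ∈ I` for all `i` (indices modulo `ℓ`). -/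
def IsOCFCycle (Q : GentleData) {ℓ : ℕ} (c : ZMod ℓ → Q.A) : Prop :=
  ∀ i : ZMod ℓ, Q.tgt (c i) = Q.src (c (i + 1)) ∧ Q.rel (c i) (c (i + 1))

/-- The arrow `a` lies on some oriented cycle with full relations. -/
def OnOCFCycle (Q : GentleData) (a : Q.A) : Prop :=
  ∃ ℓ : ℕ, 1 ≤ ℓ ∧ ∃ c : ZMod ℓ → Q.A, IsOCFCycle Q c ∧ ∃ i : ZMod ℓ, c i = a

/-- The whole quiver `(Q, I)` is an oriented cycle of some length `ℓ ≥ 1` with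
full relations. -/
def QuiverIsOCF (Q : GentleData) : Prop :=
  ∃ ℓ : ℕ, 1 ≤ ℓ ∧ ∃ (e : Q.V ≃ ZMod ℓ) (f : Q.A ≃ ZMod ℓ),
    (∀ a, e (Q.src a) = f a) ∧ (∀ a, e (Q.tgt a) = f a + 1) ∧
    (∀ a b, Q.rel a b ↔ f b = f a + 1)

/-- The quiver `(Q, I)` is a single point: exactly one vertex and no arrows. -/
def QuiverIsPoint (Q : GentleData) : Prop :=
  (∃ v : Q.V, ∀ w : Q.V, w = v) ∧ IsEmpty Q.A

/-- `v` is a common vertex of two distinct oriented cycles with full relations. -/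
def TwoCyclesAt (Q : GentleData) (v : Q.V) : Prop :=
  ∃ (ℓ ℓ' : ℕ), 1 ≤ ℓ ∧ 1 ≤ ℓ' ∧ ∃ (c : ZMod ℓ → Q.A) (c' : ZMod ℓ' → Q.A),
    IsOCFCycle Q c ∧ IsOCFCycle Q c' ∧ Function.Injective c ∧ Function.Injective c' ∧
    (∃ i, Q.tgt (c i) = v) ∧ (∃ j, Q.tgt (c' j) = v) ∧ Set.range c ≠ Set.range c'

/-- The set of vertices lying on an oriented cycle with full relations. -/
def ocfVertexSet (Q : GentleData) : Set Q.V :=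
  {v | ∃ a : Q.A, OnOCFCycle Q a ∧ Q.tgt a = v}

/-- Oriented cycles with full relations, identified up to cyclic rotation. -/
def ocfCycleSetoid (Q : GentleData) (ℓ : ℕ) :
    Setoid {c : ZMod ℓ → Q.A // IsOCFCycle Q c ∧ Function.Injective c} where
  r c c' := ∃ t : ZMod ℓ, ∀ i, c'.1 i = c.1 (i + t)
  iseqv := by
    refine ⟨fun c => ⟨0, fun i => by rw [add_zero]⟩, ?_, ?_⟩
    · rintro c c' ⟨t, ht⟩
      exact ⟨-t, fun i => by rw [ht (i + -t), neg_add_cancel_right]⟩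
    · rintro a b c ⟨t, ht⟩ ⟨s, hs⟩
      exact ⟨s + t, fun i => by rw [hs i, ht (i + s), add_assoc]⟩

/-- `AGzero Q ℓ` is the value `φ_A(0, ℓ)` of the AG-invariant: the number of
oriented cycles of length `ℓ` with full relations, counted up to rotation. -/
noncomputable def AGzero (Q : GentleData) (ℓ : ℕ) : ℕ :=
  Nat.card (Quotient (ocfCycleSetoid Q ℓ))

/-- A (nontrivial) forbidden path with arrows `p 0, …, p (m-1)`:
all consecutive length-two subpaths lie in `I`. -/
def IsForbiddenPath (Q : GentleData) (m : ℕ) (p : ℕ → Q.A) : Prop :=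
  ∀ i : ℕ, i + 1 < m → Q.tgt (p i) = Q.src (p (i + 1)) ∧ Q.rel (p i) (p (i + 1))

/-- A (nontrivial) forbidden thread: a maximal forbidden path (of `m ≥ 1`
arrows), i.e. one which cannot be extended on either side. -/
def IsForbiddenThread (Q : GentleData) (m : ℕ) (p : ℕ → Q.A) : Prop :=
  1 ≤ m ∧ IsForbiddenPath Q m p ∧
  (∀ b : Q.A, Q.tgt b = Q.src (p 0) → ¬ Q.rel b (p 0)) ∧
  (∀ b : Q.A, Q.src b = Q.tgt (p (m - 1)) → ¬ Q.rel (p (m - 1)) b)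

/-- A trivial forbidden thread at a vertex `v` (of length `0`). -/
def IsTrivialForbiddenThread (Q : GentleData) (v : Q.V) : Prop :=
  ({a : Q.A | Q.tgt a = v} = ∅) ∨ ({a : Q.A | Q.src a = v} = ∅) ∨
  (∃ b b' : Q.A, {a : Q.A | Q.tgt a = v} = {b} ∧ {a : Q.A | Q.src a = v} = {b'} ∧ ¬ Q.rel b b')

/-- The set of lengths of the forbidden threads of finite length. -/
def finiteForbiddenThreadLengths (Q : GentleData) : Set ℕ∞ :=
  {n : ℕ∞ | (n = 0 ∧ ∃ v : Q.V, IsTrivialForbiddenThread Q v) ∨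
    (∃ m : ℕ, n = (m : ℕ∞) ∧ ∃ p : ℕ → Q.A, IsForbiddenThread Q m p)}

/-- The set of lengths of all forbidden threads; an oriented cycle with full
relations gives rise to a forbidden thread of infinite length. -/
def forbiddenThreadLengths (Q : GentleData) : Set ℕ∞ :=
  finiteForbiddenThreadLengths Q ∪
    {n : ℕ∞ | n = ⊤ ∧ ∃ ℓ : ℕ, 1 ≤ ℓ ∧ ∃ c : ZMod ℓ → Q.A, IsOCFCycle Q c}

section Dimensions

/-- `projDimLE R n M` : the `R`-module `M` admits a projective resolution of
length at most `n`. -/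
def projDimLE (R : Type) [Ring R] (n : ℕ) (M : Type) [AddCommGroup M] [Module R M] : Prop :=
  ∃ (P : ℕ → ModuleCat.{0} R) (d : ∀ i : ℕ, ↥(P (i + 1)) →ₗ[R] ↥(P i)) (ε : ↥(P 0) →ₗ[R] M),
    (∀ i, Module.Projective R ↥(P i)) ∧
    Function.Surjective ε ∧ Function.Exact (d 0) ε ∧
    (∀ i, Function.Exact (d (i + 1)) (d i)) ∧
    (∀ i, n ≤ i → Subsingleton ↥(P (i + 1)))

/-- `injDimLE R n M` : the `R`-module `M` admits an injective coresolution of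
length at most `n`. -/
def injDimLE (R : Type) [Ring R] (n : ℕ) (M : Type) [AddCommGroup M] [Module R M] : Prop :=
  ∃ (E : ℕ → ModuleCat.{0} R) (d : ∀ i : ℕ, ↥(E i) →ₗ[R] ↥(E (i + 1))) (ι : M →ₗ[R] ↥(E 0)),
    (∀ i, Module.Injective R ↥(E i)) ∧
    Function.Injective ι ∧ Function.Exact ι (d 0) ∧
    (∀ i, Function.Exact (d i) (d (i + 1))) ∧
    (∀ i, n ≤ i → Subsingleton ↥(E (i + 1)))

/-- The projective dimension of a module, in `ℕ∞`. -/
noncomputable def projDim (R : Type) [Ring R] (M : Type) [AddCommGroup M] [Module R M] : ℕ∞ :=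
  sInf {n : ℕ∞ | ∃ m : ℕ, n = (m : ℕ∞) ∧ projDimLE R m M}

/-- The injective dimension of a module, in `ℕ∞`. -/
noncomputable def injDim (R : Type) [Ring R] (M : Type) [AddCommGroup M] [Module R M] : ℕ∞ :=
  sInf {n : ℕ∞ | ∃ m : ℕ, n = (m : ℕ∞) ∧ injDimLE R m M}

/-- The global dimension of a ring: the supremum of the projective dimensions
of all finitely generated modules. -/
noncomputable def globalDim (R : Type) [Ring R] : ℕ∞ :=
  ⨆ (M : ModuleCat.{0} R) (_ : Module.Finite R ↥M), projDim R ↥M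

/-- The left self-injective dimension: the injective dimension of `R` as a
left module over itself. -/
noncomputable def leftSelfInjDim (R : Type) [Ring R] : ℕ∞ := injDim R R

/-- The right self-injective dimension: the injective dimension of `R` as a
right module over itself. -/
noncomputable def rightSelfInjDim (R : Type) [Ring R] : ℕ∞ := injDim Rᵐᵒᵖ R

end Dimensions

section Radical

/-- The radical of a module: the intersection of its maximal submodules. -/
def radMod (R : Type) [Ring R] (M : Type) [AddCommGroup M] [Module R M] : Submodule R M :=
  sInf {N : Submodule R M | IsCoatom N}

/-- The top of a module: the quotient by its radical. -/
abbrev topMod (R : Type) [Ring R] (M : Type) [AddCommGroup M] [Module R M] : Type :=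
  M ⧸ radMod R M

/-- The socle of a module: the sum of its simple submodules. -/
def socMod (R : Type) [Ring R] (M : Type) [AddCommGroup M] [Module R M] : Submodule R M :=
  sSup {N : Submodule R M | IsAtom N}

/-- The simple right `A`-module `S(v)` at a vertex `v`, realized as the top of
the indecomposable projective `e_v A`. -/
noncomputable abbrev SimpleAt (k : Type) [Field k] (Q : GentleData) (v : Q.V) : Type :=
  topMod (GentleAlgebra k Q)ᵐᵒᵖ ↥(vertexModule k Q v)

end Radical

section Gorenstein

/-- An indecomposable module: nontrivial, and admitting no nontrivial direct
sum decomposition. -/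
def IndecomposableModule (R : Type) [Ring R] (M : Type) [AddCommGroup M] [Module R M] : Prop :=
  Nontrivial M ∧ ∀ N N' : Submodule R M, IsCompl N N' → N = ⊥ ∨ N' = ⊥

/-- A Gorenstein projective module: a syzygy of an acyclic complex of
projective modules which remains acyclic after applying `Hom(−, R)`. -/
def IsGorensteinProjective (R : Type) [Ring R] (G : Type) [AddCommGroup G] [Module R G] :
    Prop :=
  ∃ (P : ℤ → ModuleCat.{0} R) (d : ∀ n : ℤ, ↥(P n) →ₗ[R] ↥(P (n + 1))),
    (∀ n, Module.Projective R ↥(P n)) ∧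
    (∀ n, Function.Exact (d n) (d (n + 1))) ∧
    (∀ n : ℤ, Function.Exact
      (fun g : ↥(P (n + 1 + 1)) →ₗ[R] R => g ∘ₗ d (n + 1))
      (fun g : ↥(P (n + 1)) →ₗ[R] R => g ∘ₗ d n)) ∧
    Nonempty (G ≃ₗ[R] ↥(LinearMap.range (d (-1))))

/-- An indecomposable non-projective Gorenstein projective module. -/
def IsIndecNonProjGP (R : Type) [Ring R] (M : Type) [AddCommGroup M] [Module R M] : Prop :=
  IndecomposableModule R M ∧ IsGorensteinProjective R M ∧ ¬ Module.Projective R M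

/-- An indecomposable Gorenstein projective module. -/
def IsIndecGP (R : Type) [Ring R] (M : Type) [AddCommGroup M] [Module R M] : Prop :=
  IndecomposableModule R M ∧ IsGorensteinProjective R M

/-- Indecomposable non-projective Gorenstein projective right `A`-modules
(realized as right submodules of `A`), up to isomorphism. -/
noncomputable def npgpSetoid (k : Type) [Field k] (Q : GentleData) :
    Setoid {N : Submodule (GentleAlgebra k Q)ᵐᵒᵖ (GentleAlgebra k Q) //
      IsIndecNonProjGP (GentleAlgebra k Q)ᵐᵒᵖ ↥N} where
  r N N' := Nonempty (↥N.1 ≃ₗ[(GentleAlgebra k Q)ᵐᵒᵖ] ↥N'.1)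
  iseqv := ⟨fun _ => ⟨LinearEquiv.refl _ _⟩, fun ⟨e⟩ => ⟨e.symm⟩, fun ⟨e⟩ ⟨f⟩ => ⟨e.trans f⟩⟩

/-- The number of isomorphism classes of indecomposable non-projective
Gorenstein projective right `A`-modules. -/
noncomputable def numIndecNonProjGP (k : Type) [Field k] (Q : GentleData) : ℕ :=
  Nat.card (Quotient (npgpSetoid k Q))

/-- Indecomposable Gorenstein projective right `A`-modules (realized as right
submodules of `A`), up to isomorphism. -/
noncomputable def gpSetoid (k : Type) [Field k] (Q : GentleData) :
    Setoid {N : Submodule (GentleAlgebra k Q)ᵐᵒᵖ (GentleAlgebra k Q) //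
      IsIndecGP (GentleAlgebra k Q)ᵐᵒᵖ ↥N} where
  r N N' := Nonempty (↥N.1 ≃ₗ[(GentleAlgebra k Q)ᵐᵒᵖ] ↥N'.1)
  iseqv := ⟨fun _ => ⟨LinearEquiv.refl _ _⟩, fun ⟨e⟩ => ⟨e.symm⟩, fun ⟨e⟩ ⟨f⟩ => ⟨e.trans f⟩⟩

end Gorenstein

section Strings

/-- A walk in the quiver: `len` letters, the `i`-th letter (for `1 ≤ i ≤ len`)
joining the vertex `vtx (i-1)` to `vtx i`; a letter `(a, true)` is the arrow
`a` read forwards (direct), and `(a, false)` is its formal inverse. -/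
structure StrWalk (Q : GentleData) : Type where
  len : ℕ
  vtx : ℕ → Q.V
  letter : ℕ → Q.A × Bool

/-- The walk is a string: letters join consecutive vertices, the walk is
reduced (no `a a⁻` nor `a⁻ a`), and it avoids the relations. -/
def IsString (Q : GentleData) (w : StrWalk Q) : Prop :=
  (∀ i : ℕ, 1 ≤ i → i ≤ w.len →
    ((w.letter i).2 = true →
      Q.src (w.letter i).1 = w.vtx (i - 1) ∧ Q.tgt (w.letter i).1 = w.vtx i) ∧
    ((w.letter i).2 = false →
      Q.tgt (w.letter i).1 = w.vtx (i - 1) ∧ Q.src (w.letter i).1 = w.vtx i)) ∧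
  (∀ i : ℕ, 1 ≤ i → i + 1 ≤ w.len →
    (¬ ((w.letter i).1 = (w.letter (i + 1)).1 ∧ (w.letter i).2 ≠ (w.letter (i + 1)).2)) ∧
    ((w.letter i).2 = true → (w.letter (i + 1)).2 = true →
      ¬ Q.rel (w.letter i).1 (w.letter (i + 1)).1) ∧
    ((w.letter i).2 = false → (w.letter (i + 1)).2 = false →
      ¬ Q.rel (w.letter (i + 1)).1 (w.letter i).1))

/-- `M` is the string module `M(w)` of the string `w`: it has a `k`-basis
indexed by the vertices `0, …, len` of the walk, the idempotent of a vertex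
fixes exactly the basis vectors sitting at that vertex, and an arrow moves
basis vectors along the corresponding letters of the walk. -/
def IsStringModule (k : Type) [Field k] (Q : GentleData) (w : StrWalk Q) (M : Type)
    [AddCommGroup M] [Module k M] [Module (GentleAlgebra k Q)ᵐᵒᵖ M] : Prop :=
  (∀ (c : k) (m : M), (algebraMap k (GentleAlgebra k Q)ᵐᵒᵖ c) • m = c • m) ∧
  ∃ b : ℕ → M,
    LinearIndependent k (fun i : Fin (w.len + 1) => b i) ∧
    Submodule.span k (b '' {i : ℕ | i ≤ w.len}) = ⊤ ∧
    (∀ i : ℕ, i ≤ w.len → ∀ v : Q.V,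
      (op (idemOf k Q v)) • b i = if w.vtx i = v then b i else 0) ∧
    (∀ i : ℕ, i ≤ w.len → ∀ a : Q.A,
      (op (arrOf k Q a)) • b i =
        (if i + 1 ≤ w.len ∧ w.letter (i + 1) = (a, true) then b (i + 1) else 0) +
        (if 1 ≤ i ∧ w.letter i = (a, false) then b (i - 1) else 0))

/-- The vertex at position `i` is a source of the walk: the adjacent letters
point away from it. -/
def sourceAt (Q : GentleData) (w : StrWalk Q) (i : ℕ) : Prop :=
  i ≤ w.len ∧ (i = 0 ∨ (w.letter i).2 = false) ∧ (i = w.len ∨ (w.letter (i + 1)).2 = true)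

/-- The vertex at position `i` is a sink of the walk: the adjacent letters
point towards it. -/
def sinkAt (Q : GentleData) (w : StrWalk Q) (i : ℕ) : Prop :=
  i ≤ w.len ∧ (i = 0 ∨ (w.letter i).2 = true) ∧ (i = w.len ∨ (w.letter (i + 1)).2 = false)

/-- Left maximality of the inverse prefix (letters `1, …, i`) of a walk of the
shape "inverse prefix followed by direct suffix": the underlying direct path
out of the vertex at position `i` cannot be prolonged (and, when the prefix is
trivial, no second arrow leaves the starting vertex). -/
def LeftMaxAt (Q : GentleData) (w : StrWalk Q) (i : ℕ) : Prop :=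
  if 1 ≤ i then ∀ α : Q.A, Q.src α = w.vtx 0 → Q.rel (w.letter 1).1 α
  else ∀ α : Q.A, Q.src α = w.vtx 0 → (1 ≤ w.len ∧ α = (w.letter 1).1)

/-- Right maximality of the direct suffix (letters `i+1, …, len`) of a walk of
the shape "inverse prefix followed by direct suffix". -/
def RightMaxAt (Q : GentleData) (w : StrWalk Q) (i : ℕ) : Prop :=
  if i < w.len then ∀ β : Q.A, Q.src β = w.vtx w.len → Q.rel (w.letter w.len).1 β
  else ∀ β : Q.A, Q.src β = w.vtx w.len → (1 ≤ w.len ∧ β = (w.letter w.len).1)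

end Strings


section HomologicalTools

open CategoryTheory Abelian

variable {R : Type} [Ring R]

lemma gt_projDimLE_cons {n : ℕ} {F M : Type} [AddCommGroup F] [Module R F] [AddCommGroup M]
    [Module R M] (f : F →ₗ[R] M) (hf : Function.Surjective f) (hF : Module.Projective R F)
    (h : projDimLE R n (LinearMap.ker f)) : projDimLE R (n + 1) M := by
  obtain ⟨P, d, ε, hP, hε, h0, hd, hn⟩ := h
  refine ⟨fun i => Nat.casesOn i (ModuleCat.of R F) P,
    fun i => Nat.casesOn i ((LinearMap.ker f).subtype ∘ₗ ε) d, f, ?_, hf, ?_, ?_, ?_⟩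
  · rintro (_ | i)
    · exact hF
    · exact hP i
  · intro x
    constructor
    · intro hx
      obtain ⟨y, hy⟩ := hε ⟨x, hx⟩
      exact ⟨y, by simp [hy]⟩
    · rintro ⟨y, rfl⟩
      exact (ε y).2
  · rintro (_ | i)
    · intro x
      rw [← h0 x]
      simp
    · exact hd i
  · rintro (_ | i) hi
    · omega
    · exact hn i (by omega)

lemma gt_projDimLE_zero {M : Type} [AddCommGroup M] [Module R M] (hM : Module.Projective R M) :
    projDimLE R 0 M := by
  refine ⟨fun i => Nat.casesOn i (ModuleCat.of R M) (fun _ => ModuleCat.of R PUnit),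
    fun i => 0, LinearMap.id, ?_, Function.surjective_id, ?_, ?_, ?_⟩
  · rintro (_ | i)
    · exact hM
    · exact (inferInstance : Module.Projective R PUnit)
  · intro x
    simp [eq_comm]
  · intro i x
    have : x = 0 := Subsingleton.elim (α := PUnit) _ _
    simp [this]
  · intro i _
    exact (inferInstance : Subsingleton PUnit)

lemma gt_pd_of_projDimLE (n : ℕ) : ∀ (M : Type) [AddCommGroup M] [Module R M],
    projDimLE R n M → HasProjectiveDimensionLT (ModuleCat.of R M) (n + 1) := by
  induction n with
  | zero =>
    rintro M _ _ ⟨P, d, ε, hP, hε, h0, hd, hn⟩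
    have hinj : Function.Injective ε := by
      rw [injective_iff_map_eq_zero]
      intro x hx
      obtain ⟨y, rfl⟩ := (h0 x).1 hx
      have := hn 0 le_rfl
      rw [Subsingleton.elim y 0, map_zero]
    have := hP 0
    have hM : Module.Projective R M :=
      Module.Projective.of_equiv (LinearEquiv.ofBijective ε ⟨hinj, hε⟩)
    have : Projective (ModuleCat.of R M) := (IsProjective.iff_projective _).1 hM
    infer_instance
  | succ n ih =>
    rintro M _ _ ⟨P, d, ε, hP, hε, h0, hd, hn⟩
    have hk : projDimLE R n (LinearMap.ker ε) := by
      refine ⟨fun i => P (i + 1), fun i => d (i + 1),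
        (d 0).codRestrict _ (fun y => (h0 _).2 ⟨y, rfl⟩), fun i => hP _, ?_, ?_, fun i => hd _,
        fun i hi => hn _ (by omega)⟩
      · rintro ⟨x, hx⟩
        obtain ⟨y, hy⟩ := (h0 x).1 hx
        exact ⟨y, Subtype.ext hy⟩
      · intro x
        rw [← hd 0 x]
        exact Subtype.ext_iff
    have := ih _ hk
    have : Projective (ModuleCat.of R (P 0)) := (IsProjective.iff_projective _).1 (hP 0)
    exact ((LinearMap.shortExact_shortComplexKer hε).hasProjectiveDimensionLT_X₃_iff n this).2
      (ih _ hk)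

lemma gt_pd_ker {n : ℕ} {F M : Type} [AddCommGroup F] [Module R F] [AddCommGroup M]
    [Module R M] (f : F →ₗ[R] M) (hf : Function.Surjective f) (hF : Module.Projective R F) :
    HasProjectiveDimensionLT (ModuleCat.of R M) (n + 2) ↔
      HasProjectiveDimensionLT (ModuleCat.of R (LinearMap.ker f)) (n + 1) := by
  have : Projective (ModuleCat.of R F) := (IsProjective.iff_projective _).1 hF
  exact (LinearMap.shortExact_shortComplexKer hf).hasProjectiveDimensionLT_X₃_iff n this

lemma gt_pd_one {M : Type} [AddCommGroup M] [Module R M] :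
    HasProjectiveDimensionLT (ModuleCat.of R M) 1 ↔ Module.Projective R M := by
  rw [← projective_iff_hasProjectiveDimensionLT_one, IsProjective.iff_projective]

lemma gt_projDimLE_of_pd (n : ℕ) : ∀ (M : Type) [AddCommGroup M] [Module R M],
    HasProjectiveDimensionLT (ModuleCat.of R M) (n + 1) → projDimLE R n M := by
  induction n with
  | zero =>
    intro M _ _ h
    exact gt_projDimLE_zero (gt_pd_one.1 h)
  | succ n ih =>
    intro M _ _ h
    have hs : Function.Surjective (Finsupp.linearCombination R (id : M → M)) :=
      Finsupp.linearCombination_id_surjective R M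
    exact gt_projDimLE_cons _ hs inferInstance (ih _ ((gt_pd_ker _ hs inferInstance).1 h))

lemma gt_injDimLE_cons {n : ℕ} {F M : Type} [AddCommGroup F] [Module R F] [AddCommGroup M]
    [Module R M] (f : M →ₗ[R] F) (hf : Function.Injective f) (hF : Module.Injective R F)
    (h : injDimLE R n (F ⧸ LinearMap.range f)) : injDimLE R (n + 1) M := by
  obtain ⟨E, d, ι, hE, hι, h0, hd, hn⟩ := h
  refine ⟨fun i => Nat.casesOn i (ModuleCat.of R F) E,
    fun i => Nat.casesOn i (ι ∘ₗ (LinearMap.range f).mkQ) d, f, ?_, hf, ?_, ?_, ?_⟩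
  · rintro (_ | i)
    · exact hF
    · exact hE i
  · intro x
    change ι ((LinearMap.range f).mkQ x) = 0 ↔ _
    rw [map_eq_zero_iff _ hι]
    simp
  · rintro (_ | i)
    · intro x
      refine (h0 x).trans ?_
      constructor
      · rintro ⟨y, rfl⟩
        obtain ⟨z, rfl⟩ := Submodule.mkQ_surjective _ y
        exact ⟨z, rfl⟩
      · rintro ⟨y, rfl⟩
        exact ⟨_, rfl⟩
    · exact hd i
  · rintro (_ | i) hi
    · omega
    · exact hn i (by omega)

lemma gt_injective_punit : Module.Injective R PUnit.{1} :=
  ⟨fun _ _ _ _ _ _ _ _ _ => ⟨0, fun _ => rfl⟩⟩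

lemma gt_injDimLE_zero {M : Type} [AddCommGroup M] [Module R M] (hM : Module.Injective R M) :
    injDimLE R 0 M := by
  refine ⟨fun i => Nat.casesOn i (ModuleCat.of R M) (fun _ => ModuleCat.of R PUnit),
    fun i => 0, LinearMap.id, ?_, Function.injective_id, ?_, ?_, ?_⟩
  · rintro (_ | i)
    · exact hM
    · exact gt_injective_punit
  · intro x
    simp
  · intro i x
    have : x = 0 := Subsingleton.elim (α := PUnit) _ _
    simp [this]
  · intro i _
    exact (inferInstance : Subsingleton PUnit)

lemma gt_shortExact_coker {F M : Type} [AddCommGroup F] [Module R F] [AddCommGroup M]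
    [Module R M] (f : M →ₗ[R] F) (hf : Function.Injective f) :
    (ModuleCat.shortComplexOfCompEqZero f (LinearMap.range f).mkQ
      (LinearMap.range_mkQ_comp f)).ShortExact :=
  ModuleCat.shortComplex_shortExact _ (LinearMap.exact_map_mkQ_range f) hf
    (Submodule.mkQ_surjective _)

lemma gt_id_of_injDimLE (n : ℕ) : ∀ (M : Type) [AddCommGroup M] [Module R M],
    injDimLE R n M → HasInjectiveDimensionLT (ModuleCat.of R M) (n + 1) := by
  induction n with
  | zero =>
    rintro M _ _ ⟨E, d, ι, hE, hι, h0, hd, hn⟩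
    have hs : Function.Surjective ι := by
      intro x
      have := hn 0 le_rfl
      exact (h0 x).1 (Subsingleton.elim _ _)
    have hM : Module.Injective R M := by
      rw [← Module.Baer.iff_injective]
      exact Module.Baer.of_equiv (LinearEquiv.ofBijective ι ⟨hι, hs⟩).symm
        (Module.Baer.of_injective (hE 0))
    have : Injective (ModuleCat.of R M) := (Module.injective_iff_injective_object R M).1 hM
    infer_instance
  | succ n ih =>
    rintro M _ _ ⟨E, d, ι, hE, hι, h0, hd, hn⟩
    have hk : injDimLE R n (E 0 ⧸ LinearMap.range ι) := by
      refine ⟨fun i => E (i + 1), fun i => d (i + 1),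
        (LinearMap.range ι).liftQ (d 0) (by rintro _ ⟨y, rfl⟩; exact (h0 _).2 ⟨y, rfl⟩),
        fun i => hE _, ?_, ?_, fun i => hd _, fun i hi => hn _ (by omega)⟩
      · rw [injective_iff_map_eq_zero]
        intro x hx
        obtain ⟨y, rfl⟩ := Submodule.mkQ_surjective _ x
        have := (h0 y).1 hx
        simpa using this
      · intro x
        rw [hd 0 x]
        constructor
        · rintro ⟨y, rfl⟩
          exact ⟨(LinearMap.range ι).mkQ y, rfl⟩
        · rintro ⟨y, rfl⟩
          obtain ⟨z, rfl⟩ := Submodule.mkQ_surjective _ y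
          exact ⟨z, rfl⟩
    have : Injective (ModuleCat.of R (E 0)) :=
      (Module.injective_iff_injective_object R _).1 (hE 0)
    exact ((gt_shortExact_coker ι hι).hasInjectiveDimensionLT_X₃_iff n this).1 (ih _ hk)

/-- If `Ext¹(M/N, Y) = 0` then maps extend. -/
lemma gt_extend_of_ext_one {F M Y : Type} [AddCommGroup F] [Module R F] [AddCommGroup M]
    [Module R M] [AddCommGroup Y] [Module R Y] (f : F →ₗ[R] M) (hf : Function.Surjective f)
    (h : Subsingleton (Ext (ModuleCat.of R M) (ModuleCat.of R Y) 1))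
    (g : LinearMap.ker f →ₗ[R] Y) : ∃ g' : F →ₗ[R] Y, ∀ x : LinearMap.ker f, g' x = g x := by
  obtain ⟨φ, hφ⟩ := Ext.contravariant_sequence_exact₁ (LinearMap.shortExact_shortComplexKer hf)
    (ModuleCat.of R Y) (Ext.mk₀ (ModuleCat.ofHom g)) (add_zero 1) (Subsingleton.elim _ _)
  obtain ⟨φ, rfl⟩ := Ext.homEquiv₀.symm.surjective φ
  have h2 : ModuleCat.ofHom (LinearMap.ker f).subtype ≫ φ = ModuleCat.ofHom g :=
    Ext.homEquiv₀.symm.injective (by simpa using hφ)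
  refine ⟨φ.hom, fun x => ?_⟩
  have := congrArg (fun t => t.hom x) h2
  simpa using this

lemma gt_injDimLE_of_ext (n : ℕ) : ∀ (M : Type) [AddCommGroup M] [Module R M],
    (∀ I : Ideal R, Subsingleton (Ext (ModuleCat.of R (R ⧸ I)) (ModuleCat.of R M) (n + 1))) →
    injDimLE R n M := by
  induction n with
  | zero =>
    intro M _ _ h
    apply gt_injDimLE_zero
    apply Module.Baer.injective
    intro I g
    have hk : LinearMap.ker I.mkQ = I := Submodule.ker_mkQ I
    obtain ⟨g', hg'⟩ := gt_extend_of_ext_one I.mkQ (Submodule.mkQ_surjective I) (h I)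
      (g ∘ₗ (LinearEquiv.ofEq _ _ hk).toLinearMap)
    refine ⟨g', fun x hx => ?_⟩
    exact hg' ⟨x, by rw [hk]; exact hx⟩
  | succ n ih =>
    intro M _ _ h
    obtain ⟨⟨J, hJ, f, hf⟩⟩ := EnoughInjectives.presentation (ModuleCat.of R M)
    have hf' : Function.Injective f.hom := (ModuleCat.mono_iff_injective _).1 hf
    have hJ' : Module.Injective R J := (Module.injective_iff_injective_object R J).2 hJ
    refine gt_injDimLE_cons f.hom hf' hJ' (ih _ fun I => ⟨fun a b => ?_⟩)
    have hS := gt_shortExact_coker f.hom hf'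
    suffices H : ∀ x : Ext (ModuleCat.of R (R ⧸ I)) (ModuleCat.of R (J ⧸ LinearMap.range f.hom))
        (n + 1), x = 0 by rw [H a, H b]
    intro x
    have := h I
    obtain ⟨y, hy⟩ := Ext.covariant_sequence_exact₃ _ hS x rfl (Subsingleton.elim _ _)
    rw [← hy]
    have hy0 : y = 0 := Ext.eq_zero_of_injective (I := J) y
    rw [hy0, Ext.zero_comp]

lemma gt_ext_ker {n : ℕ} {F M Y : Type} [AddCommGroup F] [Module R F] [AddCommGroup M]
    [Module R M] [AddCommGroup Y] [Module R Y] (f : F →ₗ[R] M) (hf : Function.Surjective f)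
    (hF : Module.Projective R F)
    (h : Subsingleton (Ext (ModuleCat.of R M) (ModuleCat.of R Y) (n + 2))) :
    Subsingleton (Ext (ModuleCat.of R (LinearMap.ker f)) (ModuleCat.of R Y) (n + 1)) := by
  have hP : Projective (ModuleCat.of R F) := (IsProjective.iff_projective _).1 hF
  suffices H : ∀ x : Ext (ModuleCat.of R (LinearMap.ker f)) (ModuleCat.of R Y) (n + 1), x = 0 from
    ⟨fun a b => by rw [H a, H b]⟩
  intro x
  obtain ⟨φ, hφ⟩ := Ext.contravariant_sequence_exact₁ (LinearMap.shortExact_shortComplexKer hf)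
    (ModuleCat.of R Y) x (n₁ := n + 2) (by omega) (Subsingleton.elim _ _)
  rw [← hφ]
  have h0 : φ = 0 := Ext.eq_zero_of_projective (P := ModuleCat.of R F) φ
  rw [h0, Ext.comp_zero]

lemma gt_ext_retract {n : ℕ} {K L Y : Type} [AddCommGroup K] [Module R K] [AddCommGroup L]
    [Module R L] [AddCommGroup Y] [Module R Y] (i : K →ₗ[R] L) (r : L →ₗ[R] K)
    (hri : r ∘ₗ i = LinearMap.id)
    (h : Subsingleton (Ext (ModuleCat.of R L) (ModuleCat.of R Y) n)) :
    Subsingleton (Ext (ModuleCat.of R K) (ModuleCat.of R Y) n) := by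
  suffices H : ∀ x : Ext (ModuleCat.of R K) (ModuleCat.of R Y) n, x = 0 from
    ⟨fun a b => by rw [H a, H b]⟩
  intro x
  have h1 : ModuleCat.ofHom i ≫ ModuleCat.ofHom r = 𝟙 (ModuleCat.of R K) := by
    rw [← ModuleCat.ofHom_comp, hri]; rfl
  rw [← x.mk₀_id_comp, ← h1, ← Ext.mk₀_comp_mk₀, Ext.comp_assoc_of_second_deg_zero,
    Subsingleton.elim ((Ext.mk₀ (ModuleCat.ofHom r)).comp x (zero_add n)) 0, Ext.comp_zero]

lemma gt_pd_retract {n : ℕ} {K L : Type} [AddCommGroup K] [Module R K] [AddCommGroup L]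
    [Module R L] (i : K →ₗ[R] L) (r : L →ₗ[R] K)
    (hri : r ∘ₗ i = LinearMap.id)
    (h : HasProjectiveDimensionLT (ModuleCat.of R L) n) :
    HasProjectiveDimensionLT (ModuleCat.of R K) n :=
  Retract.hasProjectiveDimensionLT (Y := ModuleCat.of R L)
    ⟨ModuleCat.ofHom i, ModuleCat.ofHom r, by rw [← ModuleCat.ofHom_comp, hri]; rfl⟩ n

lemma gt_pd_prod {n : ℕ} {K L : Type} [AddCommGroup K] [Module R K] [AddCommGroup L]
    [Module R L] (hK : HasProjectiveDimensionLT (ModuleCat.of R K) n)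
    (hL : HasProjectiveDimensionLT (ModuleCat.of R L) n) :
    HasProjectiveDimensionLT (ModuleCat.of R (K × L)) n :=
  (ModuleCat.shortComplex_shortExact (ModuleCat.shortComplexOfCompEqZero (LinearMap.inl R K L)
    (LinearMap.snd R K L) (by ext; simp)) (Function.Exact.inl_snd) LinearMap.inl_injective
    LinearMap.snd_surjective).hasProjectiveDimensionLT_X₂ n hK hL

lemma gt_pd_quot {n : ℕ} {M : Type} [AddCommGroup M] [Module R M] (N : Submodule R M)
    (hK : HasProjectiveDimensionLT (ModuleCat.of R N) n)
    (hL : HasProjectiveDimensionLT (ModuleCat.of R (M ⧸ N)) n) :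
    HasProjectiveDimensionLT (ModuleCat.of R M) n :=
  (ModuleCat.shortComplex_shortExact (ModuleCat.shortComplexOfCompEqZero N.subtype
    N.mkQ (by ext; simp)) (LinearMap.exact_subtype_mkQ N) N.injective_subtype
    N.mkQ_surjective).hasProjectiveDimensionLT_X₂ n hK hL

/-- The projection onto one factor of a disjoint sup. -/
lemma gt_sup_proj {M : Type} [AddCommGroup M] [Module R M] (p q : Submodule R M)
    (hpq : Disjoint p q) : Nonempty ((p × q) ≃ₗ[R] (p ⊔ q : Submodule R M)) := by
  have hinj : Function.Injective (p.subtype.coprod q.subtype) := by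
    rw [injective_iff_map_eq_zero]
    rintro ⟨a, b⟩ h
    simp only [LinearMap.coprod_apply, Submodule.subtype_apply] at h
    have ha : (a : M) = 0 := by
      refine Submodule.disjoint_def.1 hpq _ a.2 ?_
      rw [eq_neg_of_add_eq_zero_left h]
      exact q.neg_mem b.2
    have hb : (b : M) = 0 := by simpa [ha] using h
    ext <;> simp [ha, hb]
  have hr : LinearMap.range (p.subtype.coprod q.subtype) = p ⊔ q := by
    simp [LinearMap.range_coprod]
  exact ⟨(LinearEquiv.ofInjective _ hinj).trans (LinearEquiv.ofEq _ _ hr)⟩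

lemma gt_pd_sup {n : ℕ} {M : Type} [AddCommGroup M] [Module R M] (p q : Submodule R M)
    (hpq : Disjoint p q) (hp : HasProjectiveDimensionLT (ModuleCat.of R p) n)
    (hq : HasProjectiveDimensionLT (ModuleCat.of R q) n) :
    HasProjectiveDimensionLT (ModuleCat.of R (p ⊔ q : Submodule R M)) n := by
  obtain ⟨e⟩ := gt_sup_proj p q hpq
  exact gt_pd_retract e.symm.toLinearMap e.toLinearMap (by ext; simp) (gt_pd_prod hp hq)

/-- A submodule `q` complementing `p` in `L = p ⊔ q` is a retract. -/
lemma gt_sup_retract {M : Type} [AddCommGroup M] [Module R M] (p q L : Submodule R M)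
    (hpq : Disjoint p q) (hL : L = p ⊔ q) : ∃ (i : q →ₗ[R] L) (r : L →ₗ[R] q),
    r ∘ₗ i = LinearMap.id ∧ ∀ x, ((i x : L) : M) = x := by
  subst hL
  have hinj : Function.Injective (p.subtype.coprod q.subtype) := by
    rw [injective_iff_map_eq_zero]
    rintro ⟨a, b⟩ h
    simp only [LinearMap.coprod_apply, Submodule.subtype_apply] at h
    have ha : (a : M) = 0 := by
      refine Submodule.disjoint_def.1 hpq _ a.2 ?_
      rw [eq_neg_of_add_eq_zero_left h]
      exact q.neg_mem b.2
    have hb : (b : M) = 0 := by simpa [ha] using h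
    ext <;> simp [ha, hb]
  have hr : LinearMap.range (p.subtype.coprod q.subtype) = p ⊔ q := by
    simp [LinearMap.range_coprod]
  let e := (LinearEquiv.ofInjective _ hinj).trans (LinearEquiv.ofEq _ _ hr)
  refine ⟨e.toLinearMap ∘ₗ LinearMap.inr R p q, LinearMap.snd R p q ∘ₗ e.symm.toLinearMap, ?_, ?_⟩
  · ext x; simp
  · intro x
    change ((0 : p) : M) + (x : M) = x
    simp

lemma gt_projective_of_split {M : Type} [AddCommGroup M] [Module R M] (f : R →ₗ[R] M)
    (hf : Function.Surjective f) (g : R →ₗ[R] R) (hg : LinearMap.ker f ≤ LinearMap.ker g)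
    (hfg : f ∘ₗ g = f) : Module.Projective R M := by
  refine Module.Projective.of_split
    ((LinearMap.ker f).liftQ g hg ∘ₗ (f.quotKerEquivOfSurjective hf).symm.toLinearMap) f ?_
  ext m
  obtain ⟨y, rfl⟩ := hf m
  have : (f.quotKerEquivOfSurjective hf).symm (f y) = (LinearMap.ker f).mkQ y := by
    rw [LinearEquiv.symm_apply_eq]; rfl
  simp only [LinearMap.comp_apply, LinearEquiv.coe_coe, this, LinearMap.id_apply]
  exact DFunLike.congr_fun hfg y

end HomologicalTools


section AbstractData

open CategoryTheory Abelian

/-- Abstract multiplicative data of a gentle algebra, for left modules over `S`. -/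
structure GTData (k S V A : Type) [Field k] [Ring S] [Algebra k S] [Fintype V] [Fintype A]
    [DecidableEq V] [DecidableEq A] (s t : A → V) (rel : A → A → Prop) where
  e : V → S
  x : A → S
  ε : V → S →+* k
  idem : ∀ v, e v * e v = e v
  orth : ∀ v w, v ≠ w → e v * e w = 0
  sum_e : ∑ v, e v = 1
  xs : ∀ a, x a * e (s a) = x a
  tx : ∀ a, e (t a) * x a = x a
  relz : ∀ a b, rel a b → x b * x a = 0
  uniq : ∀ a b b', rel a b → rel a b' → b = b'
  comp : ∀ a b, rel a b → s b = t a
  indep : ∀ y : A → S, ∑ a, y a * x a = 0 → ∀ a, y a * x a = 0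
  ker : ∀ a y, y * x a = 0 → y * e (t a) = 0 ∨ ∃ b, rel a b ∧ ∃ z, y * e (t a) = z * x b
  εe : ∀ v, ε v (e v) = 1
  εx : ∀ v a, ε v (x a) = 0
  span : ∀ y v, ∃ (c : k) (z : A → S), y * e v = algebraMap k S c * e v + ∑ a, z a * x a
  fin : Module.Finite k S
  nil : ∃ N : ℕ, ∀ l : List A, l.length = N → (l.map x).prod = 0

namespace GTData

variable {k S V A : Type} [Field k] [Ring S] [Algebra k S] [Fintype V] [Fintype A]
    [DecidableEq V] [DecidableEq A] {s t : A → V} {rel : A → A → Prop}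
    (G : GTData k S V A s t rel)

/-- Transport along an algebra isomorphism. -/
noncomputable def transport {S' : Type} [Ring S'] [Algebra k S'] (f : S ≃ₐ[k] S') :
    GTData k S' V A s t rel where
  e v := f (G.e v)
  x a := f (G.x a)
  ε v := (G.ε v).comp f.symm.toAlgHom.toRingHom
  idem v := by rw [← map_mul, G.idem]
  orth v w h := by rw [← map_mul, G.orth v w h, map_zero]
  sum_e := by rw [← map_sum, G.sum_e, map_one]
  xs a := by rw [← map_mul, G.xs]
  tx a := by rw [← map_mul, G.tx]
  relz a b h := by rw [← map_mul, G.relz a b h, map_zero]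
  uniq := G.uniq
  comp := G.comp
  indep y h a := by
    have h1 : ∑ a, f.symm (y a) * G.x a = 0 := by
      apply f.injective
      simpa [map_sum, map_mul] using h
    have := congrArg f (G.indep _ h1 a)
    simpa using this
  ker a y h := by
    have h1 : f.symm y * G.x a = 0 := by
      apply f.injective
      simpa using h
    rcases G.ker a _ h1 with h2 | ⟨b, hb, z, hz⟩
    · left
      have := congrArg f h2
      simpa using this
    · right
      refine ⟨b, hb, f z, ?_⟩
      have := congrArg f hz
      simpa using this
  εe v := by simp [G.εe]
  εx v a := by simp [G.εx]
  span y v := by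
    obtain ⟨c, z, h⟩ := G.span (f.symm y) v
    refine ⟨c, fun a => f (z a), ?_⟩
    have := congrArg f h
    simpa [map_sum] using this
  fin := by
    have := G.fin
    exact Module.Finite.equiv f.toLinearEquiv
  nil := by
    obtain ⟨N, hN⟩ := G.nil
    refine ⟨N, fun l hl => ?_⟩
    have := congrArg f (hN l hl)
    rw [map_list_prod, List.map_map, map_zero] at this
    exact this

/-- The left ideal generated by `x a`. -/
def X (a : A) : Submodule S S := Submodule.span S {G.x a}

/-- The left ideal `S (1 - e v)`. -/
def E (v : V) : Submodule S S := Submodule.span S {1 - G.e v}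

/-- The left ideal `S (1 - e v) + ∑_{a ∈ T} S x_a`. -/
def L (v : V) (T : Finset A) : Submodule S S := G.E v ⊔ T.sup G.X

lemma mem_X {a : A} {y : S} : y ∈ G.X a ↔ ∃ z, z * G.x a = y := by
  simp [X, Submodule.mem_span_singleton]

lemma mem_E {v : V} {y : S} : y ∈ G.E v ↔ y * G.e v = 0 := by
  simp only [E, Submodule.mem_span_singleton, smul_eq_mul]
  constructor
  · rintro ⟨z, rfl⟩
    rw [mul_assoc, sub_mul, G.idem]; simp
  · intro h
    exact ⟨y, by rw [mul_sub, h]; simp⟩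

lemma xe_of_ne {a : A} {v : V} (h : s a ≠ v) : G.x a * G.e v = 0 := by
  rw [← G.xs a, mul_assoc, G.orth _ _ h, mul_zero]

lemma mem_sup {T : Finset A} {y : S} : y ∈ T.sup G.X ↔
    ∃ z : A → S, y = ∑ a ∈ T, z a * G.x a := by
  induction T using Finset.induction_on generalizing y with
  | empty => simp
  | insert a T ha ih =>
    rw [Finset.sup_insert, Submodule.mem_sup]
    constructor
    · rintro ⟨u, hu, w, hw, rfl⟩
      obtain ⟨z, rfl⟩ := G.mem_X.1 hu
      obtain ⟨z', rfl⟩ := ih.1 hw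
      refine ⟨fun b => if b = a then z else z' b, ?_⟩
      rw [Finset.sum_insert ha]
      simp only [if_true]
      congr 1
      refine Finset.sum_congr rfl fun b hb => ?_
      rw [if_neg (by rintro rfl; exact ha hb)]
    · rintro ⟨z, rfl⟩
      rw [Finset.sum_insert ha]
      exact ⟨_, G.mem_X.2 ⟨_, rfl⟩, _, ih.2 ⟨z, rfl⟩, rfl⟩

/-- Elements of `L v T`: those `y` whose `e v`-component lies in `∑_{a ∈ T} S x_a`. -/
lemma mem_L {v : V} {T : Finset A} (hT : ∀ a ∈ T, s a = v) {y : S} : y ∈ G.L v T ↔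
    ∃ z : A → S, y * G.e v = ∑ a ∈ T, z a * G.x a := by
  rw [L, Submodule.mem_sup]
  have key : ∀ z : A → S, (∑ a ∈ T, z a * G.x a) * G.e v = ∑ a ∈ T, z a * G.x a := by
    intro z
    rw [Finset.sum_mul]
    refine Finset.sum_congr rfl fun a ha => ?_
    rw [mul_assoc, ← hT a ha, G.xs]
  constructor
  · rintro ⟨u, hu, w, hw, rfl⟩
    obtain ⟨z, rfl⟩ := G.mem_sup.1 hw
    exact ⟨z, by rw [add_mul, G.mem_E.1 hu, zero_add, key]⟩
  · rintro ⟨z, hz⟩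
    refine ⟨y * (1 - G.e v), ?_, y * G.e v, G.mem_sup.2 ⟨z, hz⟩, by rw [mul_sub]; simp⟩
    rw [G.mem_E, mul_assoc, sub_mul, G.idem]; simp

lemma disj_E_sup {v : V} {T : Finset A} (hT : ∀ a ∈ T, s a = v) :
    Disjoint (G.E v) (T.sup G.X) := by
  rw [Submodule.disjoint_def]
  intro y hy hy'
  obtain ⟨z, rfl⟩ := G.mem_sup.1 hy'
  have := G.mem_E.1 hy
  rw [Finset.sum_mul] at this
  rw [← this]
  refine Finset.sum_congr rfl fun a ha => ?_
  rw [mul_assoc, ← hT a ha, G.xs]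

lemma disj_X_sup {a : A} {T : Finset A} (ha : a ∉ T) : Disjoint (G.X a) (T.sup G.X) := by
  rw [Submodule.disjoint_def]
  intro y hy hy'
  obtain ⟨z, rfl⟩ := G.mem_X.1 hy
  obtain ⟨z', hz'⟩ := G.mem_sup.1 hy'
  have h := G.indep (fun b => (if b = a then z else 0) - (if b ∈ T then z' b else 0)) (by
    simp only [sub_mul, Finset.sum_sub_distrib, ite_mul, zero_mul]
    rw [Finset.sum_ite_eq' Finset.univ a (fun b => z * G.x b), if_pos (Finset.mem_univ a), hz',
      ← Finset.sum_filter, Finset.filter_mem_eq_inter, Finset.univ_inter, sub_self]) a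
  simpa [ha] using h

lemma projective_E (v : V) : Module.Projective S (G.E v) := by
  let f : S →ₗ[S] G.E v := (LinearMap.toSpanSingleton S S (1 - G.e v)).codRestrict _
    (fun y => Submodule.mem_span_singleton.2 ⟨y, rfl⟩)
  have hid : (1 - G.e v) * (1 - G.e v) = 1 - G.e v := by
    simp only [mul_sub, sub_mul, G.idem]; simp
  refine gt_projective_of_split f ?_ (LinearMap.toSpanSingleton S S (1 - G.e v)) ?_ ?_
  · rintro ⟨y, hy⟩
    obtain ⟨z, rfl⟩ := Submodule.mem_span_singleton.1 hy
    exact ⟨z, rfl⟩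
  · intro y hy
    exact congrArg Subtype.val hy
  · ext
    change ((1 : S) * (1 - G.e v)) * (1 - G.e v) = 1 * (1 - G.e v)
    rw [one_mul, hid]

lemma pd_sup {n : ℕ} (T : Finset A)
    (h : ∀ a ∈ T, HasProjectiveDimensionLT (ModuleCat.of S (G.X a)) (n + 1)) :
    HasProjectiveDimensionLT (ModuleCat.of S (T.sup G.X : Submodule S S)) (n + 1) := by
  induction T using Finset.induction_on with
  | empty =>
    rw [Finset.sup_empty]
    have h1 : HasProjectiveDimensionLT (ModuleCat.of S (⊥ : Submodule S S)) 1 :=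
      gt_pd_one.2 inferInstance
    exact hasProjectiveDimensionLT_of_ge _ 1 _ (by omega)
  | insert a T ha ih =>
    rw [Finset.sup_insert]
    exact gt_pd_sup _ _ (G.disj_X_sup ha) (h a (by simp)) (ih fun b hb => h b (by simp [hb]))

lemma pd_L {n : ℕ} (v : V) (T : Finset A) (hT : ∀ a ∈ T, s a = v)
    (h : ∀ a ∈ T, HasProjectiveDimensionLT (ModuleCat.of S (G.X a)) (n + 1)) :
    HasProjectiveDimensionLT (ModuleCat.of S (G.L v T)) (n + 1) := by
  have h1 : HasProjectiveDimensionLT (ModuleCat.of S (G.E v)) 1 :=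
    gt_pd_one.2 (G.projective_E v)
  exact gt_pd_sup _ _ (G.disj_E_sup hT) (hasProjectiveDimensionLT_of_ge _ 1 _ (by omega))
    (G.pd_sup T h)

lemma retract_L {a : A} {v : V} {T : Finset A} (hT : ∀ a ∈ T, s a = v) (ha : a ∈ T) :
    ∃ (i : G.X a →ₗ[S] G.L v T) (r : G.L v T →ₗ[S] G.X a),
      r ∘ₗ i = LinearMap.id ∧ ∀ x, ((i x : G.L v T) : S) = x := by
  refine gt_sup_retract (G.E v ⊔ (T.erase a).sup G.X) (G.X a) _ ?_ ?_
  · rw [Submodule.disjoint_def]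
    intro y hy hy'
    obtain ⟨u, hu, w, hw, rfl⟩ := Submodule.mem_sup.1 hy
    have h1 : u = 0 := by
      refine Submodule.disjoint_def.1 (G.disj_E_sup hT) u hu ?_
      have h2 : u = (u + w) - w := by abel
      rw [h2]
      refine Submodule.sub_mem _ ?_ ?_
      · exact Finset.le_sup (f := G.X) ha hy'
      · exact Finset.sup_mono (f := G.X) (Finset.erase_subset a T) hw
    subst h1
    rw [zero_add] at hy' ⊢
    exact Submodule.disjoint_def.1 (G.disj_X_sup (Finset.notMem_erase a T)) w hy' hw
  · rw [L, sup_assoc]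
    congr 1
    conv_lhs => rw [← Finset.insert_erase ha]
    rw [Finset.sup_insert, sup_comm]

/-- Modules presented as `S / L v T`. -/
lemma projective_of_ker {M : Type} [AddCommGroup M] [Module S M] (f : S →ₗ[S] M)
    (hf : Function.Surjective f) (v : V) (hk : LinearMap.ker f = G.L v ∅) :
    Module.Projective S M := by
  refine gt_projective_of_split f hf (LinearMap.toSpanSingleton S S (G.e v)) ?_ ?_
  · intro y hy
    rw [hk, G.mem_L (by simp)] at hy
    simpa using hy
  · ext
    have h1 : (1 - G.e v) ∈ LinearMap.ker f := by
      rw [hk, G.mem_L (by simp)]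
      exact ⟨0, by rw [sub_mul, G.idem]; simp⟩
    rw [LinearMap.mem_ker, map_sub, sub_eq_zero] at h1
    simp [h1]

lemma pd_of_ker {M : Type} [AddCommGroup M] [Module S M] (f : S →ₗ[S] M)
    (hf : Function.Surjective f) (v : V) (T : Finset A) (hT : ∀ a ∈ T, s a = v)
    (hk : LinearMap.ker f = G.L v T) {n : ℕ}
    (h : ∀ a ∈ T, HasProjectiveDimensionLT (ModuleCat.of S (G.X a)) (n + 1)) :
    HasProjectiveDimensionLT (ModuleCat.of S M) (n + 2) := by
  rw [gt_pd_ker f hf inferInstance, hk]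
  exact G.pd_L v T hT h

lemma ε_L {v : V} {T : Finset A} (hT : ∀ a ∈ T, s a = v) {y : S} (hy : y ∈ G.L v T) :
    G.ε v y = 0 := by
  obtain ⟨z, hz⟩ := (G.mem_L hT).1 hy
  have := congrArg (G.ε v) hz
  simpa [G.εe, G.εx] using this

lemma not_projective_of_ker {M : Type} [AddCommGroup M] [Module S M] (f : S →ₗ[S] M)
    (hf : Function.Surjective f) (v : V) (T : Finset A) (hT : ∀ a ∈ T, s a = v)
    (hk : LinearMap.ker f = G.L v T) {a : A} (ha : a ∈ T) : ¬ Module.Projective S M := by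
  intro hP
  obtain ⟨σ, hσ⟩ := Module.projective_lifting_property f LinearMap.id hf
  have hσ' : ∀ m, f (σ m) = m := fun m => DFunLike.congr_fun hσ m
  set u : S := σ (f 1) with hu
  have hl : 1 - u ∈ G.L v T := by
    rw [← hk, LinearMap.mem_ker, map_sub, hσ', sub_self]
  have hxa : G.x a ∈ LinearMap.ker f := by
    rw [hk]
    exact (le_sup_right : T.sup G.X ≤ G.L v T)
      (Finset.le_sup (f := G.X) ha (Submodule.mem_span_singleton_self _))
  have hxu : G.x a * u = 0 := by
    have : G.x a • f 1 = 0 := by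
      rw [← map_smul, smul_eq_mul, mul_one]; exact hxa
    rw [hu, ← smul_eq_mul, ← map_smul, this, map_zero]
  obtain ⟨z, hz⟩ := (G.mem_L hT).1 hl
  -- `x_a = x_a (1 - u) e_v = ∑ x_a z_b x_b`
  have h1 : G.x a = ∑ b ∈ T, G.x a * z b * G.x b := by
    have h2 : G.x a * ((1 - u) * G.e v) = G.x a := by
      rw [← mul_assoc, mul_sub, hxu, sub_zero, mul_one, ← hT a ha, G.xs]
    rw [hz, Finset.mul_sum] at h2
    rw [← h2]
    conv_rhs => rw [h2]
    exact Finset.sum_congr rfl fun b _ => (mul_assoc _ _ _).symm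
  have h3 := G.indep (fun b => (if b ∈ T then G.x a * z b else 0) - if b = a then 1 else 0) (by
    simp only [sub_mul, ite_mul, zero_mul, one_mul, Finset.sum_sub_distrib]
    rw [Finset.sum_ite_mem, Finset.univ_inter, ← h1]
    simp) a
  simp only [ha, if_true] at h3
  have h4 : G.ε (t a) ((G.x a * z a - 1) * G.e (t a)) = 0 := by
    rcases G.ker a _ h3 with h5 | ⟨b, hb, w, h5⟩
    · rw [h5, map_zero]
    · rw [h5, map_mul, G.εx, mul_zero]
  simp [G.εe, G.εx] at h4

lemma pd_X_of_ker {M : Type} [AddCommGroup M] [Module S M] (f : S →ₗ[S] M)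
    (hf : Function.Surjective f) (v : V) (T : Finset A) (hT : ∀ a ∈ T, s a = v)
    (hk : LinearMap.ker f = G.L v T) {n : ℕ}
    (h : HasProjectiveDimensionLT (ModuleCat.of S M) (n + 2)) {a : A} (ha : a ∈ T) :
    HasProjectiveDimensionLT (ModuleCat.of S (G.X a)) (n + 1) := by
  rw [gt_pd_ker f hf inferInstance, hk] at h
  obtain ⟨i, r, hri, -⟩ := G.retract_L hT ha
  exact gt_pd_retract i r hri h

lemma ext_X_of_ker {M : Type} [AddCommGroup M] [Module S M] (f : S →ₗ[S] M)
    (hf : Function.Surjective f) (v : V) (T : Finset A) (hT : ∀ a ∈ T, s a = v)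
    (hk : LinearMap.ker f = G.L v T) {n : ℕ}
    (h : Subsingleton (Ext (ModuleCat.of S M) (ModuleCat.of S S) (n + 2))) {a : A} (ha : a ∈ T) :
    Subsingleton (Ext (ModuleCat.of S (G.X a)) (ModuleCat.of S S) (n + 1)) := by
  have h1 := gt_ext_ker f hf inferInstance h
  rw [hk] at h1
  obtain ⟨i, r, hri, -⟩ := G.retract_L hT ha
  exact gt_ext_retract i r hri h1

lemma extend_X_of_ker {M : Type} [AddCommGroup M] [Module S M] (f : S →ₗ[S] M)
    (hf : Function.Surjective f) (v : V) (T : Finset A) (hT : ∀ a ∈ T, s a = v)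
    (hk : LinearMap.ker f = G.L v T)
    (h : Subsingleton (Ext (ModuleCat.of S M) (ModuleCat.of S S) 1)) {a : A} (ha : a ∈ T)
    (g : G.X a →ₗ[S] S) : ∃ g' : S →ₗ[S] S, ∀ y : G.X a, g' y = g y := by
  obtain ⟨i, r, hri, hi⟩ := G.retract_L hT ha
  obtain ⟨g', hg'⟩ := gt_extend_of_ext_one f hf h (g ∘ₗ r ∘ₗ (LinearEquiv.ofEq _ _ hk).toLinearMap)
  refine ⟨g', fun y => ?_⟩
  have h1 := hg' ⟨i y, by rw [hk]; exact (i y).2⟩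
  simp only [hi] at h1
  rw [h1]
  have h2 : r (i y) = y := DFunLike.congr_fun hri y
  simp only [LinearMap.comp_apply]
  congr 1
  exact (congrArg r (Subtype.ext (hi y).symm)).trans h2

/-- The presentation of `S x_a`. -/
def fX (a : A) : S →ₗ[S] G.X a := (LinearMap.toSpanSingleton S S (G.x a)).codRestrict _
    (fun y => Submodule.mem_span_singleton.2 ⟨y, rfl⟩)

lemma fX_surj (a : A) : Function.Surjective (G.fX a) := by
  rintro ⟨y, hy⟩
  obtain ⟨z, rfl⟩ := Submodule.mem_span_singleton.1 hy
  exact ⟨z, rfl⟩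

lemma mem_ker_fX {a : A} {y : S} : y ∈ LinearMap.ker (G.fX a) ↔ y * G.x a = 0 := by
  rw [LinearMap.mem_ker, Subtype.ext_iff]; rfl

lemma ker_fX_empty {a : A} (h : ∀ b, ¬ rel a b) : LinearMap.ker (G.fX a) = G.L (t a) ∅ := by
  ext y
  rw [G.mem_ker_fX, G.mem_L (by simp)]
  simp only [Finset.sum_empty, exists_const]
  constructor
  · intro hy
    rcases G.ker a y hy with h1 | ⟨b, hb, -⟩
    · exact h1
    · exact absurd hb (h b)
  · intro hy
    rw [← G.tx a, ← mul_assoc, hy, zero_mul]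

lemma ker_fX_single {a b : A} (h : rel a b) : LinearMap.ker (G.fX a) = G.L (t a) {b} := by
  ext y
  rw [G.mem_ker_fX, G.mem_L (by simp [G.comp a b h])]
  simp only [Finset.sum_singleton]
  constructor
  · intro hy
    rcases G.ker a y hy with h1 | ⟨b', hb, z, hz⟩
    · exact ⟨0, by simp [h1]⟩
    · obtain rfl := G.uniq a b b' h hb
      exact ⟨fun _ => z, hz⟩
  · rintro ⟨z, hz⟩
    rw [← G.tx a, ← mul_assoc, hz, mul_assoc, G.relz a b h, mul_zero]

/-- Forbidden paths. -/
def FP (rel : A → A → Prop) (m : ℕ) (p : ℕ → A) : Prop := ∀ i, i + 1 < m → rel (p i) (p (i + 1))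

lemma pd_X (n : ℕ) : ∀ a : A, (∀ m p, p 0 = a → FP rel m p → m ≤ n + 1) →
    HasProjectiveDimensionLT (ModuleCat.of S (G.X a)) (n + 1) := by
  induction n with
  | zero =>
    intro a h
    refine gt_pd_one.2 (G.projective_of_ker _ (G.fX_surj a) (t a) (G.ker_fX_empty fun b hb => ?_))
    have := h 2 (fun i => if i = 0 then a else b) (by simp) (by
      intro i hi
      obtain rfl : i = 0 := by omega
      simpa using hb)
    omega
  | succ n ih =>
    intro a h
    by_cases hb : ∃ b, rel a b
    · obtain ⟨b, hb⟩ := hb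
      refine G.pd_of_ker _ (G.fX_surj a) (t a) {b} (by simp [G.comp a b hb])
        (G.ker_fX_single hb) ?_
      intro b' hb'
      obtain rfl := Finset.mem_singleton.1 hb'
      refine ih _ fun m p hp hm => ?_
      have := h (m + 1) (fun i => Nat.casesOn i a p) rfl (by
        rintro (_ | i) hi
        · simpa [hp] using hb
        · exact hm i (by omega))
      omega
    · have h1 : HasProjectiveDimensionLT (ModuleCat.of S (G.X a)) 1 :=
        gt_pd_one.2 (G.projective_of_ker _ (G.fX_surj a) (t a)
          (G.ker_fX_empty fun b hb' => hb ⟨b, hb'⟩))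
      exact hasProjectiveDimensionLT_of_ge _ 1 _ (by omega)

lemma exists_killed {M : Type} [AddCommGroup M] [Module S M] (n : ℕ) : ∀ m : M, m ≠ 0 →
    (∀ l : List A, l.length = n → (l.map G.x).prod • m = 0) →
    ∃ m' : M, m' ≠ 0 ∧ ∀ a, G.x a • m' = 0 := by
  induction n with
  | zero =>
    intro m hm h
    exact absurd (by simpa using h [] rfl) hm
  | succ n ih =>
    intro m hm h
    by_cases hk : ∀ a, G.x a • m = 0
    · exact ⟨m, hm, hk⟩
    · push Not at hk
      obtain ⟨a, ha⟩ := hk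
      refine ih _ ha fun l hl => ?_
      have := h (l ++ [a]) (by simp [hl])
      simpa [mul_smul] using this

lemma simple_pres {M : Type} [AddCommGroup M] [Module S M] (hM : IsSimpleModule S M) :
    ∃ (v : V) (f : S →ₗ[S] M), Function.Surjective f ∧
      LinearMap.ker f = G.L v (Finset.univ.filter fun a => s a = v) := by
  have := hM.nontrivial
  obtain ⟨m₀, hm₀⟩ := exists_ne (0 : M)
  obtain ⟨N, hN⟩ := G.nil
  obtain ⟨m₁, hm₁, hk₁⟩ := G.exists_killed N m₀ hm₀ (fun l hl => by rw [hN l hl, zero_smul])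
  obtain ⟨v, hv⟩ : ∃ v, G.e v • m₁ ≠ 0 := by
    by_contra! h
    apply hm₁
    rw [← one_smul S m₁, ← G.sum_e, Finset.sum_smul]
    exact Finset.sum_eq_zero fun v _ => h v
  set m := G.e v • m₁ with hm
  have hem : G.e v • m = m := by rw [hm, smul_smul, G.idem]
  have hk : ∀ a, G.x a • m = 0 := by
    intro a
    rw [hm, smul_smul]
    by_cases ha : s a = v
    · rw [← ha, G.xs, hk₁]
    · rw [G.xe_of_ne ha, zero_smul]
  refine ⟨v, LinearMap.toSpanSingleton S M m, ?_, ?_⟩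
  · exact IsSimpleModule.toSpanSingleton_surjective S hv
  · ext y
    rw [G.mem_L (by simp), LinearMap.mem_ker, LinearMap.toSpanSingleton_apply]
    constructor
    · intro hy
      obtain ⟨c, z, hz⟩ := G.span y v
      have hc : c = 0 := by
        by_contra hc
        apply hv
        have h1 : (y * G.e v) • m = 0 := by rw [mul_smul, hem, hy]
        rw [hz, add_smul, mul_smul, hem, Finset.sum_smul,
          Finset.sum_eq_zero (fun a _ => by rw [mul_smul, hk, smul_zero]), add_zero] at h1
        have h2 : (algebraMap k S c⁻¹ * algebraMap k S c) • m = 0 := by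
          rw [mul_smul, h1, smul_zero]
        rwa [← map_mul, inv_mul_cancel₀ hc, map_one, one_smul] at h2
      refine ⟨z, ?_⟩
      have h3 : y * G.e v = y * G.e v * G.e v := by rw [mul_assoc, G.idem]
      rw [h3, hz, hc, map_zero, zero_mul, zero_add, Finset.sum_mul, Finset.sum_filter]
      refine Finset.sum_congr rfl fun a _ => ?_
      split_ifs with ha
      · rw [mul_assoc, ← ha, G.xs]
      · rw [mul_assoc, G.xe_of_ne ha, mul_zero]
    · rintro ⟨z, hz⟩
      rw [← hem, smul_smul, hz, Finset.sum_smul]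
      exact Finset.sum_eq_zero fun a _ => by rw [mul_smul, hk, smul_zero]

lemma pd_simple (G : GTData k S V A s t rel) {M : Type} [AddCommGroup M] [Module S M] (hM : IsSimpleModule S M) (d : ℕ)
    (hd : ∀ m p, FP rel m p → m ≤ d) : HasProjectiveDimensionLT (ModuleCat.of S M) (d + 1) := by
  obtain ⟨v, f, hf, hk⟩ := G.simple_pres hM
  cases d with
  | zero =>
    refine gt_pd_one.2 (G.projective_of_ker f hf v ?_)
    rw [hk]
    congr 1
    ext a
    have := hd 1 (fun _ => a) (fun i hi => by omega)
    omega
  | succ d => exact G.pd_of_ker f hf v _ (by simp) hk fun a _ => G.pd_X d a fun m p _ h => hd m p h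

lemma pd_finiteLength (G : GTData k S V A s t rel) (d : ℕ) (hd : ∀ m p, FP rel m p → m ≤ d) {M : Type} [AddCommGroup M]
    [Module S M] (hM : IsFiniteLength S M) :
    HasProjectiveDimensionLT (ModuleCat.of S M) (d + 1) := by
  induction hM with
  | of_subsingleton =>
    rename_i M _ _ _
    have h1 : HasProjectiveDimensionLT (ModuleCat.of S M) 1 := gt_pd_one.2 inferInstance
    exact hasProjectiveDimensionLT_of_ge _ 1 _ (by omega)
  | of_simple_quotient _ ih =>
    rename_i M _ _ N _ _
    exact gt_pd_quot N ih (G.pd_simple inferInstance d hd)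

lemma pd_finite (G : GTData k S V A s t rel) (d : ℕ) (hd : ∀ m p, FP rel m p → m ≤ d) {M : Type} [AddCommGroup M]
    [Module S M] [Module.Finite S M] :
    HasProjectiveDimensionLT (ModuleCat.of S M) (d + 1) := by
  have := G.fin
  have : IsArtinianRing S := IsArtinianRing.of_finite k S
  have h : IsFiniteLength S M := ((IsArtinianRing.tfae S M).out 0 3).1 ‹_›
  exact G.pd_finiteLength d hd h

lemma pd_X_lower (n : ℕ) : ∀ p : ℕ → A, FP rel (n + 2) p →
    ¬ HasProjectiveDimensionLT (ModuleCat.of S (G.X (p 0))) (n + 1) := by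
  induction n with
  | zero =>
    intro p hp h
    have h0 := hp 0 (by omega)
    exact G.not_projective_of_ker _ (G.fX_surj (p 0)) _ {p 1} (by simp [G.comp _ _ h0])
      (G.ker_fX_single h0) (Finset.mem_singleton_self _) (gt_pd_one.1 h)
  | succ n ih =>
    intro p hp h
    have h0 := hp 0 (by omega)
    exact ih (fun i => p (i + 1)) (fun i hi => hp (i + 1) (by omega))
      (G.pd_X_of_ker _ (G.fX_surj (p 0)) _ {p 1} (by simp [G.comp _ _ h0])
      (G.ker_fX_single h0) h (Finset.mem_singleton_self _))

/-- The test module attached to an arrow. -/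
lemma pd_lower (n : ℕ) (p : ℕ → A) (hp : FP rel (n + 1) p) :
    ¬ HasProjectiveDimensionLT (ModuleCat.of S (S ⧸ G.L (s (p 0)) {p 0})) (n + 1) := by
  intro h
  cases n with
  | zero =>
    exact G.not_projective_of_ker _ (Submodule.mkQ_surjective _) _ {p 0} (by simp)
      (Submodule.ker_mkQ _) (Finset.mem_singleton_self _) (gt_pd_one.1 h)
  | succ n =>
    exact G.pd_X_lower n p hp (G.pd_X_of_ker _ (Submodule.mkQ_surjective _) _ {p 0} (by simp)
      (Submodule.ker_mkQ _) h (Finset.mem_singleton_self _))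

lemma not_extend {a : A} (h : ∀ b, ¬ rel a b)
    (H : ∀ g : G.X a →ₗ[S] S, ∃ g' : S →ₗ[S] S, ∀ y : G.X a, g' y = g y) : False := by
  have hk : LinearMap.ker (G.fX a) ≤
      LinearMap.ker (LinearMap.toSpanSingleton S S (G.e (t a))) := by
    intro y hy
    rw [G.ker_fX_empty h, G.mem_L (by simp)] at hy
    simpa using hy
  obtain ⟨g', hg'⟩ := H ((LinearMap.ker (G.fX a)).liftQ _ hk ∘ₗ
    ((G.fX a).quotKerEquivOfSurjective (G.fX_surj a)).symm.toLinearMap)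
  have h1 := hg' (G.fX a 1)
  have h2 : ((G.fX a).quotKerEquivOfSurjective (G.fX_surj a)).symm (G.fX a 1) =
      (LinearMap.ker (G.fX a)).mkQ 1 := by
    rw [LinearEquiv.symm_apply_eq]; rfl
  simp only [LinearMap.comp_apply, LinearEquiv.coe_coe, h2] at h1
  have h3 : g' (1 * G.x a) = 1 * G.e (t a) := h1
  rw [one_mul, one_mul] at h3
  have h4 : g' (G.x a) = G.x a * g' 1 := by
    rw [← smul_eq_mul, ← map_smul, smul_eq_mul, mul_one]
  have h5 := congrArg (G.ε (t a)) (h4.symm.trans h3)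
  simp [G.εe, G.εx] at h5

lemma ext_X_lower (n : ℕ) : ∀ p : ℕ → A, FP rel (n + 2) p → (∀ b, ¬ rel (p (n + 1)) b) →
    ¬ Subsingleton (Ext (ModuleCat.of S (G.X (p 0))) (ModuleCat.of S S) (n + 1)) := by
  induction n with
  | zero =>
    intro p hp hb h
    have h0 := hp 0 (by omega)
    exact G.not_extend hb (G.extend_X_of_ker _ (G.fX_surj (p 0)) _ {p 1} (by simp [G.comp _ _ h0])
      (G.ker_fX_single h0) h (Finset.mem_singleton_self _))
  | succ n ih =>
    intro p hp hb h
    have h0 := hp 0 (by omega)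
    exact ih (fun i => p (i + 1)) (fun i hi => hp (i + 1) (by omega)) hb
      (G.ext_X_of_ker _ (G.fX_surj (p 0)) _ {p 1} (by simp [G.comp _ _ h0])
      (G.ker_fX_single h0) h (Finset.mem_singleton_self _))

lemma ext_lower (n : ℕ) (p : ℕ → A) (hp : FP rel (n + 1) p) (hb : ∀ b, ¬ rel (p n) b) :
    ¬ Subsingleton (Ext (ModuleCat.of S (S ⧸ G.L (s (p 0)) {p 0})) (ModuleCat.of S S)
      (n + 1)) := by
  intro h
  cases n with
  | zero =>
    exact G.not_extend hb (G.extend_X_of_ker _ (Submodule.mkQ_surjective _) _ {p 0} (by simp)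
      (Submodule.ker_mkQ _) h (Finset.mem_singleton_self _))
  | succ n =>
    exact G.ext_X_lower n p hp hb (G.ext_X_of_ker _ (Submodule.mkQ_surjective _) _ {p 0} (by simp)
      (Submodule.ker_mkQ _) h (Finset.mem_singleton_self _))

theorem le_globalDim (G : GTData k S V A s t rel) (n : ℕ) (p : ℕ → A) (hp : FP rel (n + 1) p) :
    ((n + 1 : ℕ) : ℕ∞) ≤ globalDim S := by
  have hfin : Module.Finite S (ModuleCat.of S (S ⧸ G.L (s (p 0)) {p 0})) :=
    inferInstanceAs (Module.Finite S (S ⧸ G.L (s (p 0)) {p 0}))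
  refine le_trans ?_ (le_iSup₂ (f := fun (M : ModuleCat.{0} S) (_ : Module.Finite S M) =>
    projDim S M) (ModuleCat.of S (S ⧸ G.L (s (p 0)) {p 0})) hfin)
  refine le_sInf ?_
  rintro _ ⟨m, rfl, hm⟩
  rw [Nat.cast_le]
  by_contra hlt
  have h1 := gt_pd_of_projDimLE m _ hm
  exact G.pd_lower n p hp (hasProjectiveDimensionLT_of_ge _ (m + 1) _ (by omega))

theorem globalDim_le (G : GTData k S V A s t rel) (d : ℕ) (hd : ∀ m p, FP rel m p → m ≤ d) : globalDim S ≤ d := by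
  refine iSup₂_le fun M hM => sInf_le ⟨d, rfl, ?_⟩
  exact gt_projDimLE_of_pd d _ (G.pd_finite d hd)

theorem injDim_le (G : GTData k S V A s t rel) (d : ℕ) (hd : ∀ m p, FP rel m p → m ≤ d) : injDim S S ≤ d := by
  refine sInf_le ⟨d, rfl, gt_injDimLE_of_ext d _ fun I => ?_⟩
  have := G.pd_finite d hd (M := S ⧸ I)
  exact HasProjectiveDimensionLT.subsingleton _ (d + 1) _ le_rfl _

theorem le_injDim (G : GTData k S V A s t rel) (n : ℕ) (p : ℕ → A) (hp : FP rel (n + 1) p) (hb : ∀ b, ¬ rel (p n) b) :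
    ((n + 1 : ℕ) : ℕ∞) ≤ injDim S S := by
  refine le_sInf ?_
  rintro _ ⟨m, rfl, hm⟩
  rw [Nat.cast_le]
  by_contra hlt
  have h1 := gt_id_of_injDimLE m _ hm
  exact G.ext_lower n p hp hb (HasInjectiveDimensionLT.subsingleton _ (m + 1) _ (by omega) _)

/-- The main dimension computation. -/
theorem dims (G : GTData k S V A s t rel) (d : ℕ) (hd : ∀ m p, FP rel m p → m ≤ d)
    (hp : d = 0 ∨ ∃ p, FP rel d p) : globalDim S = d ∧ injDim S S = d := by
  cases d with
  | zero => exact ⟨le_antisymm (G.globalDim_le 0 hd) (by simp),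
      le_antisymm (G.injDim_le 0 hd) (by simp)⟩
  | succ n =>
    obtain ⟨p, hp⟩ := hp.resolve_left (by omega)
    refine ⟨le_antisymm (G.globalDim_le _ hd) (G.le_globalDim n p hp),
      le_antisymm (G.injDim_le _ hd) (G.le_injDim n p hp fun b hb => ?_)⟩
    have := hd (n + 2) (fun i => if i ≤ n then p i else b) (by
      intro i hi
      by_cases h : i + 1 ≤ n
      · simp only [h, if_true, (by omega : i ≤ n)]
        exact hp i (by omega)
      · obtain rfl : i = n := by omega
        simpa using hb)
    omega

end GTData

end AbstractData


section ConcreteData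

variable (k : Type) [Field k] (Q : GentleData)

lemma gt_e_idem (v : Q.V) : idemOf k Q v * idemOf k Q v = idemOf k Q v := by
  have := RingQuot.mkAlgHom_rel k (GentleRel.idem (k := k) (Q := Q) v)
  simpa [idemOf, ofGen] using this

lemma gt_e_orth (v w : Q.V) (h : v ≠ w) : idemOf k Q v * idemOf k Q w = 0 := by
  have := RingQuot.mkAlgHom_rel k (GentleRel.orth (k := k) (Q := Q) v w h)
  simpa [idemOf, ofGen] using this

lemma gt_e_sum : ∑ v, idemOf k Q v = 1 := by
  have := RingQuot.mkAlgHom_rel k (GentleRel.sum_idem (k := k) (Q := Q))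
  simpa [idemOf, ofGen] using this

lemma gt_src_mul (a : Q.A) : idemOf k Q (Q.src a) * arrOf k Q a = arrOf k Q a := by
  have := RingQuot.mkAlgHom_rel k (GentleRel.src_mul (k := k) (Q := Q) a)
  simpa [idemOf, arrOf, ofGen] using this

lemma gt_mul_tgt (a : Q.A) : arrOf k Q a * idemOf k Q (Q.tgt a) = arrOf k Q a := by
  have := RingQuot.mkAlgHom_rel k (GentleRel.mul_tgt (k := k) (Q := Q) a)
  simpa [idemOf, arrOf, ofGen] using this

lemma gt_rel (a b : Q.A) (h : Q.rel a b) : arrOf k Q a * arrOf k Q b = 0 := by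
  have := RingQuot.mkAlgHom_rel k (GentleRel.relation (k := k) (Q := Q) a b h)
  simpa [arrOf, ofGen] using this

lemma gt_src_mul_ne {v : Q.V} {a : Q.A} (h : Q.src a ≠ v) : idemOf k Q v * arrOf k Q a = 0 := by
  rw [← gt_src_mul, ← mul_assoc, gt_e_orth _ _ _ _ h.symm, zero_mul]

lemma gt_mul_tgt_ne {v : Q.V} {a : Q.A} (h : Q.tgt a ≠ v) : arrOf k Q a * idemOf k Q v = 0 := by
  rw [← gt_mul_tgt, mul_assoc, gt_e_orth _ _ _ _ h, mul_zero]

/-- Induction principle for `kQ/I`. -/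
lemma gt_induction {P : GentleAlgebra k Q → Prop} (hc : ∀ c : k, P (algebraMap k _ c))
    (he : ∀ v, P (idemOf k Q v)) (ha : ∀ a, P (arrOf k Q a))
    (hm : ∀ x y, P x → P y → P (x * y)) (hp : ∀ x y, P x → P y → P (x + y)) (x) : P x := by
  obtain ⟨y, rfl⟩ := RingQuot.mkAlgHom_surjective k (GentleRel k Q) x
  induction y using FreeAlgebra.induction with
  | grade0 c => simpa using hc c
  | grade1 g =>
    cases g with
    | vertex v => exact he v
    | arrow a => exact ha a
  | mul a b h1 h2 => rw [map_mul]; exact hm _ _ h1 h2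
  | add a b h1 h2 => rw [map_add]; exact hp _ _ h1 h2

/-- Universal property of `kQ/I`. -/
noncomputable def gtLift {B : Type} [Ring B] [Algebra k B] (E : Q.V → B) (X : Q.A → B)
    (h1 : ∀ v, E v * E v = E v) (h2 : ∀ v w, v ≠ w → E v * E w = 0) (h3 : ∑ v, E v = 1)
    (h4 : ∀ a, E (Q.src a) * X a = X a) (h5 : ∀ a, X a * E (Q.tgt a) = X a)
    (h6 : ∀ a b, Q.rel a b → X a * X b = 0) : GentleAlgebra k Q →ₐ[k] B :=
  RingQuot.liftAlgHom k ⟨FreeAlgebra.lift k (fun g => match g with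
    | GenSym.vertex v => E v
    | GenSym.arrow a => X a), by
      intro x y h
      cases h with
      | idem v => simp [h1]
      | orth v w h => simp [h2 v w h]
      | sum_idem => simp [h3]
      | src_mul a => simp [h4]
      | mul_tgt a => simp [h5]
      | relation a b h => simp [h6 a b h]⟩

lemma gtLift_idem {B : Type} [Ring B] [Algebra k B] (E : Q.V → B) (X : Q.A → B)
    (h1 h2 h3 h4 h5 h6) (v : Q.V) :
    gtLift k Q E X h1 h2 h3 h4 h5 h6 (idemOf k Q v) = E v := by
  simp [gtLift, idemOf, ofGen]

lemma gtLift_arr {B : Type} [Ring B] [Algebra k B] (E : Q.V → B) (X : Q.A → B)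
    (h1 h2 h3 h4 h5 h6) (a : Q.A) :
    gtLift k Q E X h1 h2 h3 h4 h5 h6 (arrOf k Q a) = X a := by
  simp [gtLift, arrOf, ofGen]

/-- The space on which `kQ/I` acts by left concatenation of paths. -/
abbrev GtW : Type := (Q.V × List Q.A) →₀ k

/-- The condition that the arrow `a` can be put in front of the path `(v, l)`. -/
def gtOk (a : Q.A) (p : Q.V × List Q.A) : Prop :=
  Q.tgt a = p.1 ∧ ∀ b ∈ p.2.head?, ¬ Q.rel a b

open Classical in
/-- The action of a vertex. -/
noncomputable def gtE (v : Q.V) : Module.End k (GtW k Q) :=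
  Finsupp.linearCombination k (fun p => if p.1 = v then Finsupp.single p (1 : k) else 0)

open Classical in
/-- The action of an arrow. -/
noncomputable def gtX (a : Q.A) : Module.End k (GtW k Q) :=
  Finsupp.linearCombination k
    (fun p => if gtOk Q a p then Finsupp.single (Q.src a, a :: p.2) (1 : k) else 0)

lemma gtE_single (v : Q.V) (p) : gtE k Q v (Finsupp.single p 1) =
    if p.1 = v then Finsupp.single p (1 : k) else 0 := by
  simp [gtE]

open Classical in
lemma gtX_single (a : Q.A) (p) : gtX k Q a (Finsupp.single p 1) =
    if gtOk Q a p then Finsupp.single (Q.src a, a :: p.2) (1 : k) else 0 := by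
  simp [gtX]

lemma gtW_ext {M : Type} [AddCommGroup M] [Module k M] {f g : GtW k Q →ₗ[k] M}
    (h : ∀ p, f (Finsupp.single p 1) = g (Finsupp.single p 1)) : f = g := by
  refine Finsupp.lhom_ext' fun p => LinearMap.ext_ring ?_
  simpa using h p

/-- The action of `kQ/I` on the space of paths. -/
noncomputable def gtRho : GentleAlgebra k Q →ₐ[k] Module.End k (GtW k Q) :=
  gtLift k Q (gtE k Q) (gtX k Q)
    (fun v => gtW_ext k Q fun p => by
      rw [Module.End.mul_apply, gtE_single]
      split_ifs with h <;> simp [gtE_single, h])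
    (fun v w hvw => gtW_ext k Q fun p => by
      rw [Module.End.mul_apply, gtE_single]
      split_ifs with h
      · rw [gtE_single, if_neg (by rw [h]; exact hvw.symm)]; simp
      · simp)
    (gtW_ext k Q fun p => by
      simp [LinearMap.sum_apply, gtE_single])
    (fun a => gtW_ext k Q fun p => by
      rw [Module.End.mul_apply, gtX_single]
      split_ifs with h <;> simp [gtE_single])
    (fun a => gtW_ext k Q fun p => by
      rw [Module.End.mul_apply, gtE_single]
      split_ifs with h
      · rfl
      · rw [gtX_single, if_neg (fun h' => h h'.1.symm), map_zero])
    (fun a b hab => gtW_ext k Q fun p => by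
      rw [Module.End.mul_apply, gtX_single]
      split_ifs with h
      · rw [gtX_single, if_neg (fun h' => h'.2 b (by simp) hab)]; simp
      · simp)

lemma gtRho_e (v : Q.V) : gtRho k Q (idemOf k Q v) = gtE k Q v := gtLift_idem ..

lemma gtRho_x (a : Q.A) : gtRho k Q (arrOf k Q a) = gtX k Q a := gtLift_arr ..

/-- The element of `kQ/I` given by a path. -/
noncomputable def gtPath (p : Q.V × List Q.A) : GentleAlgebra k Q :=
  idemOf k Q p.1 * (p.2.map (arrOf k Q)).prod

/-- The projection from the space of paths. -/
noncomputable def gtPsi : GtW k Q →ₗ[k] GentleAlgebra k Q :=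
  Finsupp.linearCombination k (gtPath k Q)

lemma gtPsi_single (p) : gtPsi k Q (Finsupp.single p 1) = gtPath k Q p := by
  simp [gtPsi]

lemma gt_e_path (v : Q.V) (p) : idemOf k Q v * gtPath k Q p =
    if p.1 = v then gtPath k Q p else 0 := by
  rw [gtPath, ← mul_assoc]
  split_ifs with h
  · rw [h, gt_e_idem]
  · rw [gt_e_orth _ _ _ _ (Ne.symm h), zero_mul]

open Classical in
lemma gt_x_path (a : Q.A) (p) : arrOf k Q a * gtPath k Q p =
    if gtOk Q a p then gtPath k Q (Q.src a, a :: p.2) else 0 := by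
  rw [gtPath, ← mul_assoc]
  by_cases h1 : Q.tgt a = p.1
  · rw [← h1, gt_mul_tgt]
    split_ifs with h
    · simp only [gtPath, List.map_cons, List.prod_cons, ← mul_assoc, gt_src_mul]
    · obtain ⟨v, l⟩ := p
      cases l with
      | nil => exact absurd ⟨h1, by simp⟩ h
      | cons b l =>
        have : Q.rel a b := by
          by_contra hab
          exact h ⟨h1, by simpa using hab⟩
        simp only [List.map_cons, List.prod_cons]
        rw [← mul_assoc, gt_rel _ _ _ _ this, zero_mul]
  · rw [if_neg (fun h => h1 h.1), gt_mul_tgt_ne _ _ h1, zero_mul]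

lemma gtPsi_rho (x : GentleAlgebra k Q) : ∀ w, gtPsi k Q (gtRho k Q x w) = x * gtPsi k Q w := by
  induction x using gt_induction with
  | hc c => intro w; rw [AlgHom.commutes, Module.algebraMap_end_apply, map_smul, Algebra.smul_def]
  | he v =>
    intro w
    have : gtPsi k Q ∘ₗ gtE k Q v = LinearMap.mulLeft k (idemOf k Q v) ∘ₗ gtPsi k Q :=
      gtW_ext k Q fun p => by
        simp only [LinearMap.comp_apply, gtE_single, gtPsi_single, LinearMap.mulLeft_apply,
          gt_e_path]
        split_ifs <;> simp [gtPsi_single]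
    rw [gtRho_e]
    exact DFunLike.congr_fun this w
  | ha a =>
    intro w
    have : gtPsi k Q ∘ₗ gtX k Q a = LinearMap.mulLeft k (arrOf k Q a) ∘ₗ gtPsi k Q :=
      gtW_ext k Q fun p => by
        simp only [LinearMap.comp_apply, gtX_single, gtPsi_single, LinearMap.mulLeft_apply,
          gt_x_path]
        split_ifs <;> simp [gtPsi_single]
    rw [gtRho_x]
    exact DFunLike.congr_fun this w
  | hm x y hx hy => intro w; rw [map_mul, Module.End.mul_apply, hx, hy, mul_assoc]
  | hp x y hx hy => intro w; rw [map_add, LinearMap.add_apply, map_add, hx, hy, add_mul]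

/-- The generator of the space of paths. -/
noncomputable def gtOne : GtW k Q := ∑ v, Finsupp.single (v, []) 1

lemma gtPsi_one : gtPsi k Q (gtOne k Q) = 1 := by
  simp [gtOne, gtPsi_single, gtPath, gt_e_sum]

lemma gtPsi_phi (x : GentleAlgebra k Q) : gtPsi k Q (gtRho k Q x (gtOne k Q)) = x := by
  rw [gtPsi_rho, gtPsi_one, mul_one]

/-- Linear extension of a property from paths to all elements. -/
lemma gt_path_induction {P : GentleAlgebra k Q → Prop} (h0 : P 0)
    (hp : ∀ x y, P x → P y → P (x + y)) (hs : ∀ (c : k) p, P (c • gtPath k Q p)) (x) : P x := by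
  rw [← gtPsi_phi k Q x]
  generalize gtRho k Q x (gtOne k Q) = w
  induction w using Finsupp.induction_linear with
  | zero => simpa using h0
  | add f g h1 h2 => rw [map_add]; exact hp _ _ h1 h2
  | single p c =>
    have : gtPsi k Q (Finsupp.single p c) = c • gtPath k Q p := by simp [gtPsi]
    rw [this]; exact hs c p

lemma gt_indep (y : Q.A → GentleAlgebra k Q) (h : ∑ a, arrOf k Q a * y a = 0) (a : Q.A) :
    arrOf k Q a * y a = 0 := by
  classical
  let F : GtW k Q →ₗ[k] GtW k Q := Finsupp.linearCombination k
    (fun p => if p.2.head? = some a then Finsupp.single p (1 : k) else 0)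
  have hF : ∀ b w, F (gtX k Q b w) = if b = a then gtX k Q b w else 0 := by
    intro b w
    have : F ∘ₗ gtX k Q b = if b = a then gtX k Q b else 0 := gtW_ext k Q fun p => by
      rw [LinearMap.comp_apply, gtX_single]
      by_cases hb : b = a
      · simp only [hb, if_true, gtX_single]
        split_ifs <;> simp [F]
      · simp only [hb, if_false]
        split_ifs <;> simp [F, hb]
    have h2 := DFunLike.congr_fun this w
    rw [LinearMap.comp_apply] at h2
    rw [h2]; split_ifs <;> rfl
  have h1 := congrArg (fun z => F (gtRho k Q z (gtOne k Q))) h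
  simp only [map_sum, LinearMap.sum_apply, map_mul, Module.End.mul_apply, gtRho_x, hF, map_zero,
    LinearMap.zero_apply] at h1
  rw [Finset.sum_ite_eq' Finset.univ a, if_pos (Finset.mem_univ a), ← gtRho_x,
    ← Module.End.mul_apply, ← map_mul] at h1
  rw [← gtPsi_phi k Q (arrOf k Q a * y a), h1, map_zero]

lemma gt_ker (hQ : IsGentle Q) (a : Q.A) (y : GentleAlgebra k Q) (h : arrOf k Q a * y = 0) :
    idemOf k Q (Q.tgt a) * y = 0 ∨ ∃ b, Q.rel a b ∧ ∃ z,
      idemOf k Q (Q.tgt a) * y = arrOf k Q b * z := by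
  classical
  let F : GtW k Q →ₗ[k] GtW k Q := Finsupp.linearCombination k
    (fun p => Finsupp.single (Q.tgt a, p.2.tail) (1 : k))
  let H : GtW k Q →ₗ[k] GtW k Q := Finsupp.linearCombination k
    (fun p => if Q.tgt a = p.1 ∧ ¬ gtOk Q a p then Finsupp.single p (1 : k) else 0)
  have hFH : F ∘ₗ gtX k Q a + H = gtE k Q (Q.tgt a) := gtW_ext k Q fun p => by
    obtain ⟨v, l⟩ := p
    rw [LinearMap.add_apply, LinearMap.comp_apply, gtX_single, gtE_single]
    by_cases h1 : Q.tgt a = v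
    · subst h1
      by_cases h2 : gtOk Q a (Q.tgt a, l)
      · simp [F, H, h2]
      · simp [F, H, h2]
    · have h2 : ¬ gtOk Q a (v, l) := fun h => h1 h.1
      simp [H, h1, h2, Ne.symm h1]
  set w := gtRho k Q y (gtOne k Q) with hw
  have h1 : gtX k Q a w = 0 := by
    rw [hw, ← gtRho_x, ← Module.End.mul_apply, ← map_mul, h]; simp
  have h2 : H w = gtE k Q (Q.tgt a) w := by
    rw [← hFH, LinearMap.add_apply, LinearMap.comp_apply, h1]; simp
  have h3 : idemOf k Q (Q.tgt a) * y = gtPsi k Q (H w) := by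
    rw [h2, hw, ← gtRho_e, ← Module.End.mul_apply, ← map_mul, gtPsi_phi]
  have hbad : ∀ p, Q.tgt a = p.1 ∧ ¬ gtOk Q a p → ∃ b l, Q.rel a b ∧ p = (Q.tgt a, b :: l) := by
    rintro ⟨v, l⟩ ⟨h4, h5⟩
    cases l with
    | nil => exact absurd ⟨h4, by simp⟩ h5
    | cons b l =>
      refine ⟨b, l, ?_, by rw [h4]⟩
      by_contra hab
      exact h5 ⟨h4, by simpa using hab⟩
  by_cases hb : ∃ b, Q.rel a b
  · obtain ⟨b, hb⟩ := hb
    right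
    refine ⟨b, hb, ?_⟩
    rw [h3]
    have hle : LinearMap.range (gtPsi k Q ∘ₗ H) ≤
        LinearMap.range (LinearMap.mulLeft k (arrOf k Q b)) := by
      rintro _ ⟨u, rfl⟩
      induction u using Finsupp.induction_linear with
      | zero => simp
      | add f g h1 h2 => rw [map_add]; exact add_mem h1 h2
      | single p c =>
        rw [← mul_one c, ← smul_eq_mul, ← Finsupp.smul_single, map_smul]
        refine Submodule.smul_mem _ _ ?_
        rw [LinearMap.comp_apply]
        by_cases h4 : Q.tgt a = p.1 ∧ ¬ gtOk Q a p
        · obtain ⟨b', l, hb', rfl⟩ := hbad p h4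
          have : b' = b := by
            have h7 := hQ.2.2.2.2.2.2.1 a
            rw [Set.ncard_le_one] at h7
            exact h7 b' ⟨(hQ.1 _ _ hb').symm, hb'⟩ b ⟨(hQ.1 _ _ hb).symm, hb⟩
          subst this
          refine ⟨(l.map (arrOf k Q)).prod, ?_⟩
          have h5 : H (Finsupp.single (Q.tgt a, b' :: l) 1) =
              Finsupp.single (Q.tgt a, b' :: l) 1 := by
            rw [Finsupp.linearCombination_single, if_pos h4, one_smul]
          rw [h5, gtPsi_single, gtPath, hQ.1 _ _ hb', List.map_cons, List.prod_cons, ← mul_assoc,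
            gt_src_mul, LinearMap.mulLeft_apply]
        · have h5 : H (Finsupp.single p 1) = 0 := by
            simp only [H, Finsupp.linearCombination_single, if_neg h4, smul_zero]
          rw [h5, map_zero]
          exact Submodule.zero_mem _
    obtain ⟨z, hz⟩ := hle ⟨w, rfl⟩
    exact ⟨z, hz.symm⟩
  · left
    have hH : H = 0 := gtW_ext k Q fun p => by
      simp only [H, Finsupp.linearCombination_single]
      rw [if_neg]
      · simp
      · intro h4
        obtain ⟨b, l, hb', -⟩ := hbad p h4
        exact hb ⟨b, hb'⟩
    rw [h3, hH]; simp

lemma gt_span (y : GentleAlgebra k Q) (v : Q.V) : ∃ (c : k) (z : Q.A → GentleAlgebra k Q),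
    idemOf k Q v * y = idemOf k Q v * algebraMap k _ c + ∑ a, arrOf k Q a * z a := by
  induction y using gt_path_induction with
  | h0 => exact ⟨0, 0, by simp⟩
  | hp x y hx hy =>
    obtain ⟨c, z, h⟩ := hx
    obtain ⟨c', z', h'⟩ := hy
    refine ⟨c + c', z + z', ?_⟩
    simp only [mul_add, h, h', map_add, Pi.add_apply, Finset.sum_add_distrib]
    abel
  | hs c p =>
    obtain ⟨u, l⟩ := p
    rw [mul_smul_comm, gt_e_path]
    by_cases h : u = v
    · subst h
      rw [if_pos rfl]
      cases l with
      | nil =>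
        refine ⟨c, 0, ?_⟩
        simp [gtPath, Algebra.smul_def, Algebra.commutes]
      | cons b l =>
        by_cases hb : Q.src b = u
        · refine ⟨0, fun a => if a = b then c • (l.map (arrOf k Q)).prod else 0, ?_⟩
          simp only [mul_ite, mul_zero, map_zero, zero_add]
          rw [Finset.sum_ite_eq' Finset.univ b, if_pos (Finset.mem_univ b)]
          simp only [gtPath, List.map_cons, List.prod_cons]
          rw [← mul_assoc, ← hb, gt_src_mul, mul_smul_comm]
        · refine ⟨0, 0, ?_⟩
          simp only [gtPath, List.map_cons, List.prod_cons]
          rw [← mul_assoc, gt_src_mul_ne _ _ hb]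
          simp
    · rw [if_neg h]
      exact ⟨0, 0, by simp⟩

lemma gt_chain : ∀ l : List Q.A, (l.map (arrOf k Q)).prod ≠ 0 →
    l.IsChain (fun a b => Q.tgt a = Q.src b ∧ ¬ Q.rel a b) := by
  intro l
  induction l with
  | nil => intro _; exact List.IsChain.nil
  | cons a l ih =>
    cases l with
    | nil => intro _; exact List.IsChain.singleton a
    | cons b l =>
      intro h
      refine List.IsChain.cons_cons ⟨?_, ?_⟩ (ih ?_)
      · by_contra hab
        apply h
        simp only [List.map_cons, List.prod_cons]
        rw [← mul_assoc, ← gt_src_mul k Q b, ← mul_assoc, gt_mul_tgt_ne _ _ hab, zero_mul, zero_mul]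
      · intro hab
        apply h
        simp only [List.map_cons, List.prod_cons]
        rw [← mul_assoc, gt_rel _ _ _ _ hab, zero_mul]
      · intro h0
        apply h
        rw [List.map_cons, List.prod_cons, h0, mul_zero]

lemma gt_nil (hQ : IsGentle Q) : ∃ N : ℕ, ∀ l : List Q.A, N < l.length →
    (l.map (arrOf k Q)).prod = 0 := by
  obtain ⟨N, hN⟩ := hQ.2.2.2.2.2.2.2
  refine ⟨N, fun l hl => ?_⟩
  by_contra h
  have h1 := gt_chain k Q l h
  rw [List.isChain_iff_getElem] at h1
  refine hN (fun i => l.getD i (l[0]'(by omega))) fun i hi => ?_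
  have := h1 i (by omega)
  rw [List.getD_eq_getElem _ _ (by omega), List.getD_eq_getElem _ _ (by omega)]
  exact this

lemma gt_finite (hQ : IsGentle Q) : Module.Finite k (GentleAlgebra k Q) := by
  obtain ⟨N, hN⟩ := gt_nil k Q hQ
  have hf : Set.Finite (Set.image (gtPath k Q) (Set.univ ×ˢ {l : List Q.A | l.length ≤ N})) :=
    (Set.finite_univ.prod (List.finite_length_le Q.A N)).image _
  refine ⟨⟨hf.toFinset, ?_⟩⟩
  rw [Set.Finite.coe_toFinset, eq_top_iff]
  rintro x -
  induction x using gt_path_induction with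
  | h0 => exact zero_mem _
  | hp x y hx hy => exact add_mem hx hy
  | hs c p =>
    refine Submodule.smul_mem _ _ ?_
    by_cases h : p.2.length ≤ N
    · exact Submodule.subset_span ⟨p, ⟨trivial, h⟩, rfl⟩
    · rw [gtPath, hN _ (by omega), mul_zero]
      exact zero_mem _

/-- The augmentation at a vertex. -/
noncomputable def gtEps (v : Q.V) : GentleAlgebra k Q →ₐ[k] k :=
  gtLift k Q (fun w => if w = v then 1 else 0) (fun _ => 0)
    (fun w => by split_ifs <;> simp)
    (fun u w h => by
      by_cases h1 : u = v
      · rw [if_neg (fun h2 => h (h1.trans h2.symm)) (c := w = v), mul_zero]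
      · rw [if_neg h1, zero_mul])
    (by simp) (by simp) (by simp) (by simp)

/-- The abstract data of the right modules over `kQ/I`. -/
noncomputable def gtDataRight (hQ : IsGentle Q) :
    GTData k (GentleAlgebra k Q)ᵐᵒᵖ Q.V Q.A Q.src Q.tgt Q.rel where
  e v := op (idemOf k Q v)
  x a := op (arrOf k Q a)
  ε v := RingHom.fromOpposite (gtEps k Q v).toRingHom (fun _ _ => mul_comm _ _)
  idem v := by rw [← op_mul, gt_e_idem]
  orth v w h := by rw [← op_mul, gt_e_orth _ _ _ _ h.symm, op_zero]
  sum_e := by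
    apply unop_injective
    rw [Finset.unop_sum]
    simpa using gt_e_sum k Q
  xs a := by rw [← op_mul, gt_src_mul]
  tx a := by rw [← op_mul, gt_mul_tgt]
  relz a b h := by rw [← op_mul, gt_rel _ _ _ _ h, op_zero]
  uniq a b b' h h' := by
    have h7 := hQ.2.2.2.2.2.2.1 a
    rw [Set.ncard_le_one] at h7
    exact h7 b ⟨(hQ.1 _ _ h).symm, h⟩ b' ⟨(hQ.1 _ _ h').symm, h'⟩
  comp a b h := (hQ.1 a b h).symm
  indep y h a := by
    apply unop_injective
    have h1 := congrArg unop h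
    rw [Finset.unop_sum] at h1
    simp only [unop_mul, unop_op, unop_zero] at h1 ⊢
    exact gt_indep k Q (fun a => unop (y a)) h1 a
  ker a y h := by
    have h1 := congrArg unop h
    simp only [unop_mul, unop_op, unop_zero] at h1
    rcases gt_ker k Q hQ a (unop y) h1 with h2 | ⟨b, hb, z, hz⟩
    · left
      exact unop_injective (by simpa using h2)
    · right
      exact ⟨b, hb, op z, unop_injective (by simpa using hz)⟩
  εe v := by
    have := gtLift_idem k Q (B := k) (fun w => if w = v then 1 else 0) (fun _ => 0)
    simp [RingHom.fromOpposite, gtEps, this]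
  εx v a := by
    have := gtLift_arr k Q (B := k) (fun w => if w = v then 1 else 0) (fun _ => 0)
    simp [RingHom.fromOpposite, gtEps, this]
  span y v := by
    obtain ⟨c, z, h⟩ := gt_span k Q (unop y) v
    refine ⟨c, fun a => op (z a), unop_injective ?_⟩
    rw [unop_add, Finset.unop_sum]
    simpa using h
  fin := by
    have := gt_finite k Q hQ
    exact Module.Finite.equiv (MulOpposite.opLinearEquiv k)
  nil := by
    obtain ⟨N, hN⟩ := gt_nil k Q hQ
    refine ⟨N + 1, fun l hl => unop_injective ?_⟩
    rw [unop_list_prod, List.map_map, ← List.map_reverse, unop_zero]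
    exact hN l.reverse (by simp [hl])

/-- The opposite bound quiver. -/
def gtOpp : GentleData where
  V := Q.V
  A := Q.A
  src := Q.tgt
  tgt := Q.src
  rel a b := Q.rel b a

lemma gtOpp_gentle (hQ : IsGentle Q) : IsGentle (gtOpp Q) := by
  obtain ⟨h1, h2, h3, h4, h5, h6, h7, N, h8⟩ := hQ
  refine ⟨fun a b h => (h1 b a h).symm, h3, h2, h6, h7, h4, h5, N, fun p hp => ?_⟩
  refine h8 (fun i => p (N - i)) fun i hi => ?_
  have := hp (N - (i + 1)) (by omega)
  rw [show N - (i + 1) + 1 = N - i by omega] at this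
  exact ⟨this.1.symm, this.2⟩

/-- The anti-homomorphism to the algebra of the opposite quiver. -/
noncomputable def gtAnti : GentleAlgebra k Q →ₐ[k] (GentleAlgebra k (gtOpp Q))ᵐᵒᵖ :=
  gtLift k Q (fun v => op (idemOf k (gtOpp Q) v)) (fun a => op (arrOf k (gtOpp Q) a))
    (fun v => by rw [← op_mul]; exact congrArg op (gt_e_idem k (gtOpp Q) v))
    (fun v w h => by rw [← op_mul]; exact congrArg op (gt_e_orth k (gtOpp Q) w v h.symm))
    (by
      apply unop_injective
      rw [Finset.unop_sum]
      exact gt_e_sum k (gtOpp Q))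
    (fun a => by rw [← op_mul]; exact congrArg op (gt_mul_tgt k (gtOpp Q) a))
    (fun a => by rw [← op_mul]; exact congrArg op (gt_src_mul k (gtOpp Q) a))
    (fun a b h => by rw [← op_mul]; exact congrArg op (gt_rel k (gtOpp Q) b a h))

lemma gtAnti_idem (v : Q.V) :
    gtAnti k Q (idemOf k Q v) = op (idemOf k (gtOpp Q) v) := gtLift_idem ..

lemma gtAnti_arr (a : Q.A) :
    gtAnti k Q (arrOf k Q a) = op (arrOf k (gtOpp Q) a) := gtLift_arr ..

lemma gtAnti_anti (x : GentleAlgebra k Q) :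
    unop (gtAnti k (gtOpp Q) (unop (gtAnti k Q x))) = x := by
  induction x using gt_induction with
  | hc c => simp only [AlgHom.commutes, MulOpposite.algebraMap_apply, unop_op]; rfl
  | he v =>
    exact (congrArg (fun z => unop (gtAnti k (gtOpp Q) (unop z))) (gtAnti_idem k Q v)).trans
      (congrArg unop (gtAnti_idem k (gtOpp Q) v))
  | ha a =>
    exact (congrArg (fun z => unop (gtAnti k (gtOpp Q) (unop z))) (gtAnti_arr k Q a)).trans
      (congrArg unop (gtAnti_arr k (gtOpp Q) a))
  | hm x y hx hy => rw [map_mul, unop_mul, map_mul, unop_mul, hx, hy]; rfl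
  | hp x y hx hy => rw [map_add, unop_add, map_add, unop_add, hx, hy]; rfl

/-- The isomorphism with the opposite of the algebra of the opposite quiver. -/
noncomputable def gtOppEquiv : (GentleAlgebra k (gtOpp Q))ᵐᵒᵖ ≃ₐ[k] GentleAlgebra k Q :=
  (AlgEquiv.ofBijective (gtAnti k Q) ⟨fun x y h => by
      rw [← gtAnti_anti k Q x, h, gtAnti_anti],
    fun y => ⟨unop (gtAnti k (gtOpp Q) (unop y)), unop_injective
      (gtAnti_anti k (gtOpp Q) (unop y))⟩⟩).symm

/-- The abstract data of the left modules over `kQ/I`. -/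
noncomputable def gtDataLeft (hQ : IsGentle Q) :
    GTData k (GentleAlgebra k Q) Q.V Q.A Q.tgt Q.src (fun a b => Q.rel b a) :=
  (gtDataRight k (gtOpp Q) (gtOpp_gentle Q hQ)).transport (gtOppEquiv k Q)

end ConcreteData


section FinalCombinatorics

lemma gt_injDimLE_equiv {R : Type} [Ring R] {M N : Type} [AddCommGroup M] [Module R M]
    [AddCommGroup N] [Module R N] (f : M ≃ₗ[R] N) {n : ℕ} (h : injDimLE R n N) :
    injDimLE R n M := by
  obtain ⟨E, d, ι, h1, h2, h3, h4, h5⟩ := h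
  refine ⟨E, d, ι ∘ₗ f.toLinearMap, h1, h2.comp f.injective, fun y => (h3 y).trans ?_, h4, h5⟩
  constructor
  · rintro ⟨z, rfl⟩
    exact ⟨f.symm z, by simp⟩
  · rintro ⟨z, rfl⟩
    exact ⟨f z, rfl⟩

lemma gt_injDim_equiv {R : Type} [Ring R] {M N : Type} [AddCommGroup M] [Module R M]
    [AddCommGroup N] [Module R N] (f : M ≃ₗ[R] N) : injDim R M = injDim R N := by
  unfold injDim
  congr 1
  ext n
  exact exists_congr fun m => and_congr_right fun _ =>
    ⟨gt_injDimLE_equiv f.symm, gt_injDimLE_equiv f⟩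

/-- `R` and its opposite as right modules. -/
def gtOpSelf (R : Type) [Ring R] : R ≃ₗ[Rᵐᵒᵖ] Rᵐᵒᵖ where
  toFun := op
  invFun := unop
  left_inv _ := rfl
  right_inv _ := rfl
  map_add' _ _ := rfl
  map_smul' _ _ := rfl

lemma gt_fp_iff (Q : GentleData) (hQ : IsGentle Q) (m : ℕ) (p : ℕ → Q.A) :
    IsForbiddenPath Q m p ↔ GTData.FP Q.rel m p :=
  ⟨fun h i hi => (h i hi).2, fun h i hi => ⟨hQ.1 _ _ (h i hi), h i hi⟩⟩

/-- A forbidden path of maximal length exists. -/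
lemma gt_exists_max (Q : GentleData) (N : ℕ)
    (hN : ∀ n (p : ℕ → Q.A), GTData.FP Q.rel (n + 1) p → n + 1 ≤ N) :
    ∃ d : ℕ, (∀ m (p : ℕ → Q.A), GTData.FP Q.rel m p → m ≤ d) ∧
      ((d = 0 ∧ IsEmpty Q.A) ∨ (1 ≤ d ∧ ∃ p, GTData.FP Q.rel d p)) := by
  classical
  rcases isEmpty_or_nonempty Q.A with hA | ⟨⟨a⟩⟩
  · exact ⟨0, fun m p => (hA.false (p 0)).elim, Or.inl ⟨rfl, hA⟩⟩
  · have h1 : GTData.FP Q.rel 1 (fun _ => a) := fun i hi => by omega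
    have hb : ∀ m, (∃ p, GTData.FP Q.rel m p) → m ≤ N := by
      rintro (_ | m) ⟨p, hp⟩
      · omega
      · exact hN m p hp
    refine ⟨Nat.findGreatest (fun m => ∃ p, GTData.FP Q.rel m p) N, fun m p hp =>
      Nat.le_findGreatest (hb m ⟨p, hp⟩) ⟨p, hp⟩, Or.inr ⟨Nat.le_findGreatest (hb 1 ⟨_, h1⟩)
      ⟨_, h1⟩, ?_⟩⟩
    exact Nat.findGreatest_spec (P := fun m => ∃ p, GTData.FP Q.rel m p) (hb 1 ⟨_, h1⟩) ⟨_, h1⟩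

lemma gt_thread (Q : GentleData) (hQ : IsGentle Q) (d : ℕ)
    (hd : ∀ m (p : ℕ → Q.A), GTData.FP Q.rel m p → m ≤ d) (h1 : 1 ≤ d) (p : ℕ → Q.A)
    (hp : GTData.FP Q.rel d p) : IsForbiddenThread Q d p := by
  refine ⟨h1, (gt_fp_iff Q hQ d p).2 hp, fun b _ hb => ?_, fun b _ hb => ?_⟩
  · have := hd (d + 1) (fun i => Nat.casesOn i b p) (by
      rintro (_ | i) hi
      · exact hb
      · exact hp i (by omega))
    omega
  · have := hd (d + 1) (fun i => if i ≤ d - 1 then p i else b) (by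
      intro i hi
      by_cases h : i + 1 ≤ d - 1
      · simp only [h, if_true, (by omega : i ≤ d - 1)]
        exact hp i (by omega)
      · obtain rfl : i = d - 1 := by omega
        simpa using hb)
    omega

lemma gt_sSup (Q : GentleData) (hQ : IsGentle Q) (d : ℕ)
    (hd : ∀ m (p : ℕ → Q.A), GTData.FP Q.rel m p → m ≤ d)
    (hp : (d = 0 ∧ IsEmpty Q.A) ∨ (1 ≤ d ∧ ∃ p, GTData.FP Q.rel d p)) :
    sSup (forbiddenThreadLengths Q) = d := by
  refine le_antisymm (sSup_le ?_) ?_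
  · rintro n ((⟨rfl, -⟩ | ⟨m, rfl, p, hm⟩) | ⟨-, ℓ, -, c, hc⟩)
    · simp
    · exact Nat.cast_le.2 (hd m p ((gt_fp_iff Q hQ m p).1 hm.2.1))
    · exfalso
      have := hd (d + 1) (fun i => c (i : ZMod ℓ)) (fun i _ => by
        have := (hc (i : ZMod ℓ)).2
        simpa using this)
      omega
  · rcases hp with ⟨rfl, -⟩ | ⟨h1, p, hp⟩
    · simp
    · exact le_sSup (Or.inl (Or.inr ⟨d, rfl, p, gt_thread Q hQ d hd h1 p hp⟩))

lemma gt_fp_reverse {A : Type} {rel : A → A → Prop} {m : ℕ} {p : ℕ → A}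
    (h : GTData.FP rel m p) : GTData.FP (fun a b => rel b a) m (fun i => p (m - 1 - i)) := by
  intro i hi
  have := h (m - 1 - (i + 1)) (by omega)
  rwa [show m - 1 - (i + 1) + 1 = m - 1 - i by omega] at this

end FinalCombinatorics

/-- For a gentle algebra `A = kQ/I` of finite global
dimension, the left and right self-injective dimensions of `A` both equal
`gl.dim A`, and this common value is the maximum length of a forbidden
thread of `A`. -/
theorem selfInjDim_eq_globalDim_of_finite_globalDim
    (k : Type) [Field k] [IsAlgClosed k] (Q : GentleData) (hQ : IsGentle Q)
    (hfin : globalDim (GentleAlgebra k Q)ᵐᵒᵖ ≠ ⊤) :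
    leftSelfInjDim (GentleAlgebra k Q) = globalDim (GentleAlgebra k Q)ᵐᵒᵖ ∧
    rightSelfInjDim (GentleAlgebra k Q) = globalDim (GentleAlgebra k Q)ᵐᵒᵖ ∧
    globalDim (GentleAlgebra k Q)ᵐᵒᵖ = sSup (forbiddenThreadLengths Q) := by
  have hR := gtDataRight k Q hQ
  have hL := gtDataLeft k Q hQ
  obtain ⟨N, hN⟩ := ENat.ne_top_iff_exists.1 hfin
  obtain ⟨d, hd, hp⟩ := gt_exists_max Q N (fun n p hp => by
    have := hR.le_globalDim n p hp
    rw [← hN] at this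
    exact_mod_cast this)
  have h1 := hR.dims d hd (hp.imp And.left And.right)
  have h2 := hL.dims d (fun m p hp => hd m _ (gt_fp_reverse hp))
    (hp.imp And.left fun h => h.2.elim fun p hp => ⟨_, gt_fp_reverse hp⟩)
  rw [gt_sSup Q hQ d hd hp, h1.1]
  refine ⟨h2.2, ?_, rfl⟩
  rw [rightSelfInjDim, gt_injDim_equiv (gtOpSelf _), h1.2]
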